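/- Let X ⊂ ℂⁿ and Y ⊂ ℂᵐ be algebraic curves, let p ∈ X and let q ∈ Y be a regular point of Y. If the germs (X, p) and (Y, q) are bi-Lipschitz equivalent, then p is a regular point of X. -/

import Mathlib

open Set Metric

noncomputable section

/-- An algebraic set in ℂᵏ: the common zero set of a finite family of polynomials. -/
def IsAlgebraicSet {k : ℕ} (X : Set (EuclideanSpace ℂ (Fin k))) : Prop :=
  ∃ S : Finset (MvPolynomial (Fin k) ℂ),
    X = {x | ∀ p ∈ S, MvPolynomial.eval (fun i => x i) p = 0}

/-- An irreducible algebraic curve: an infinite algebraic set all of whose proper algebraic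
subsets are finite. -/
def IsIrreducibleAlgebraicCurve {k : ℕ} (X : Set (EuclideanSpace ℂ (Fin k))) : Prop :=
  IsAlgebraicSet X ∧ X.Infinite ∧ ∀ Y, IsAlgebraicSet Y → Y ⊂ X → Y.Finite

/-- An algebraic curve: a finite union of irreducible algebraic curves. -/
def IsAlgebraicCurve {k : ℕ} (X : Set (EuclideanSpace ℂ (Fin k))) : Prop :=
  ∃ F : Finset (Set (EuclideanSpace ℂ (Fin k))),
    (∀ C ∈ F, IsIrreducibleAlgebraicCurve C) ∧ X = ⋃ C ∈ F, C

/-- `f` maps `X` bijectively onto `Y` and is bi-Lipschitz (outer metric). -/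
def IsBiLipschitzOn {E F : Type*} [NormedAddCommGroup E] [NormedAddCommGroup F]
    (f : E → F) (X : Set E) (Y : Set F) : Prop :=
  Set.BijOn f X Y ∧ ∃ C : ℝ, 1 ≤ C ∧ ∀ x ∈ X, ∀ x' ∈ X,
    C⁻¹ * ‖x - x'‖ ≤ ‖f x - f x'‖ ∧ ‖f x - f x'‖ ≤ C * ‖x - x'‖

/-- `X` and `Y` are bi-Lipschitz equivalent (with respect to the outer Euclidean metric). -/
def BiLipschitzEquiv {E F : Type*} [NormedAddCommGroup E] [NormedAddCommGroup F]
    (X : Set E) (Y : Set F) : Prop :=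
  ∃ f : E → F, IsBiLipschitzOn f X Y

/-- `X` and `Y` are bi-Lipschitz equivalent at infinity. -/
def BiLipschitzEquivAtInfinity {E F : Type*} [NormedAddCommGroup E] [NormedAddCommGroup F]
    (X : Set E) (Y : Set F) : Prop :=
  ∃ (K₁ : Set E) (K₂ : Set F), IsCompact K₁ ∧ IsCompact K₂ ∧
    BiLipschitzEquiv (X \ K₁) (Y \ K₂)

/-- The germs `(X, p)` and `(Y, q)` are bi-Lipschitz equivalent. -/
def GermBiLipschitzEquiv {E F : Type*} [NormedAddCommGroup E] [NormedAddCommGroup F]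
    (X : Set E) (p : E) (Y : Set F) (q : F) : Prop :=
  ∃ (U : Set E) (V : Set F), IsOpen U ∧ IsOpen V ∧ p ∈ U ∧ q ∈ V ∧
    ∃ f : E → F, IsBiLipschitzOn f (X ∩ U) (Y ∩ V) ∧ f p = q

/-- `γ` maps `D` homeomorphically onto `S`. -/
def MapsHomeomorphicallyOnto {E : Type*} [TopologicalSpace E]
    (γ : ℂ → E) (D : Set ℂ) (S : Set E) : Prop :=
  Set.InjOn γ D ∧ γ '' D = S ∧ ContinuousOn γ D ∧
    ∃ σ : E → ℂ, ContinuousOn σ S ∧ ∀ z ∈ D, σ (γ z) = z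

/-- A regular point of a curve `X ⊂ ℂᵏ`: some neighborhood of `p` in `X` is the
homeomorphic image of an injective holomorphic map with nowhere-vanishing derivative. -/
def IsRegularPoint {k : ℕ} (X : Set (EuclideanSpace ℂ (Fin k)))
    (p : EuclideanSpace ℂ (Fin k)) : Prop :=
  ∃ (U : Set (EuclideanSpace ℂ (Fin k))) (D : Set ℂ) (γ : ℂ → EuclideanSpace ℂ (Fin k)),
    IsOpen U ∧ p ∈ U ∧ IsOpen D ∧ DifferentiableOn ℂ γ D ∧ Set.InjOn γ D ∧
    (∀ z ∈ D, deriv γ z ≠ 0) ∧ MapsHomeomorphicallyOnto γ D (X ∩ U)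

/-- The set of singular points of `X`. -/
def SingularSet {k : ℕ} (X : Set (EuclideanSpace ℂ (Fin k))) :
    Set (EuclideanSpace ℂ (Fin k)) :=
  {p ∈ X | ¬ IsRegularPoint X p}

/-- `B` is a (smooth) branch through `q` with tangent vector `v`. -/
def IsBranchAt (B : Set (EuclideanSpace ℂ (Fin 2))) (q v : EuclideanSpace ℂ (Fin 2)) : Prop :=
  ∃ (D : Set ℂ) (γ : ℂ → EuclideanSpace ℂ (Fin 2)) (z₀ : ℂ),
    IsOpen D ∧ z₀ ∈ D ∧ DifferentiableOn ℂ γ D ∧ Set.InjOn γ D ∧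
    (∀ z ∈ D, deriv γ z ≠ 0) ∧ MapsHomeomorphicallyOnto γ D B ∧
    γ z₀ = q ∧ deriv γ z₀ = v

/-- `q` is a node of the plane curve `Y`: near `q`, `Y` is the union of two smooth branches
meeting only at `q` with distinct tangent lines. -/
def IsNode (Y : Set (EuclideanSpace ℂ (Fin 2))) (q : EuclideanSpace ℂ (Fin 2)) : Prop :=
  q ∈ Y ∧ ∃ (U B₁ B₂ : Set (EuclideanSpace ℂ (Fin 2))) (v₁ v₂ : EuclideanSpace ℂ (Fin 2)),
    IsOpen U ∧ q ∈ U ∧ Y ∩ U = B₁ ∪ B₂ ∧ B₁ ∩ B₂ = {q} ∧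
    IsBranchAt B₁ q v₁ ∧ IsBranchAt B₂ q v₂ ∧ ∀ c : ℂ, v₂ ≠ c • v₁

/-- The set of points of `ℂ²` having more than one `π`-preimage in `X`. -/
def MultipleSet {n : ℕ} (π : EuclideanSpace ℂ (Fin n) →ₗ[ℂ] EuclideanSpace ℂ (Fin 2))
    (X : Set (EuclideanSpace ℂ (Fin n))) : Set (EuclideanSpace ℂ (Fin 2)) :=
  {q | ∃ x ∈ X, ∃ y ∈ X, x ≠ y ∧ π x = q ∧ π y = q}

/-- `π` is a generic plane projection for the algebraic curve `X ⊂ ℂⁿ`. -/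
def IsGenericPlaneProjection {n : ℕ}
    (π : EuclideanSpace ℂ (Fin n) →ₗ[ℂ] EuclideanSpace ℂ (Fin 2))
    (X : Set (EuclideanSpace ℂ (Fin n))) : Prop :=
  Function.Surjective π ∧
  (∀ K : Set (EuclideanSpace ℂ (Fin 2)), IsCompact K → IsCompact (X ∩ ⇑π ⁻¹' K)) ∧
  (MultipleSet π X).Finite ∧
  (∀ q ∈ MultipleSet π X, ∃ x y, x ≠ y ∧ {z ∈ X | π z = q} = {x, y} ∧
    IsRegularPoint X x ∧ IsRegularPoint X y) ∧
  (∀ q ∈ MultipleSet π X, IsNode (⇑π '' X) q) ∧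
  (∀ p ∈ X, π p ∉ MultipleSet π X →
    ∃ (U : Set (EuclideanSpace ℂ (Fin n))) (V : Set (EuclideanSpace ℂ (Fin 2))),
      IsOpen U ∧ IsOpen V ∧ p ∈ U ∧ π p ∈ V ∧
      IsBiLipschitzOn (⇑π) (X ∩ U) ((⇑π '' X) ∩ V))

/-- The complex projective plane `ℂP²`. -/
abbrev ProjPlane : Type := Projectivization ℂ (Fin 3 → ℂ)

instance : TopologicalSpace ProjPlane :=
  inferInstanceAs (TopologicalSpace (Quotient (projectivizationSetoid ℂ (Fin 3 → ℂ))))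

/-- The embedding `ℂ² → ℂP²`, `(x, y) ↦ (x : y : 1)`. -/
def toProj (p : EuclideanSpace ℂ (Fin 2)) : ProjPlane :=
  Projectivization.mk ℂ ![p 0, p 1, 1] (fun h => by simpa using congrFun h 2)

/-- The line at infinity in `ℂP²`. -/
def lineAtInfinity : Set ProjPlane := {P | P.rep 2 = 0}

/-- The projective closure of a plane curve `X ⊂ ℂ²`: the topological closure in `ℂP²`. -/
def projClosure (X : Set (EuclideanSpace ℂ (Fin 2))) : Set ProjPlane :=
  closure (toProj '' X)

/-- The germs `(A, p)` and `(B, q)` are (ambient) topologically equivalent. -/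
def GermTopEquiv {T : Type*} [TopologicalSpace T] (A : Set T) (p : T) (B : Set T) (q : T) :
    Prop :=
  ∃ (U V : Set T) (φ ψ : T → T),
    IsOpen U ∧ IsOpen V ∧ p ∈ U ∧ q ∈ V ∧
    ContinuousOn φ U ∧ ContinuousOn ψ V ∧ Set.MapsTo φ U V ∧ Set.MapsTo ψ V U ∧
    (∀ x ∈ U, ψ (φ x) = x) ∧ (∀ y ∈ V, φ (ψ y) = y) ∧
    φ p = q ∧ φ '' (A ∩ U) = B ∩ V

/-- The `i`-th standard affine chart of `ℂP²`. -/
def chart (i : Fin 3) (P : ProjPlane) : EuclideanSpace ℂ (Fin 2) :=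
  (EuclideanSpace.equiv (Fin 2) ℂ).symm fun j => P.rep (i.succAbove j) / P.rep i

/-- A regular point of a curve `C ⊂ ℂP²`: read in a standard affine chart, some neighborhood
of `p` in `C` is the homeomorphic image of an injective holomorphic map with
nowhere-vanishing derivative. -/
def IsRegularPointProj (C : Set ProjPlane) (p : ProjPlane) : Prop :=
  ∃ i : Fin 3, p.rep i ≠ 0 ∧
    ∃ W : Set ProjPlane, IsOpen W ∧ p ∈ W ∧ W ⊆ {P : ProjPlane | P.rep i ≠ 0} ∧
      ∃ (D : Set ℂ) (γ : ℂ → EuclideanSpace ℂ (Fin 2)),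
        IsOpen D ∧ DifferentiableOn ℂ γ D ∧ Set.InjOn γ D ∧ (∀ z ∈ D, deriv γ z ≠ 0) ∧
        MapsHomeomorphicallyOnto γ D (chart i '' (C ∩ W))

/-- The set of singular points of a curve `C ⊂ ℂP²`. -/
def SingularSetProj (C : Set ProjPlane) : Set ProjPlane :=
  {p ∈ C | ¬ IsRegularPointProj C p}

/-- `C` is an irreducible component of the algebraic curve `X`. -/
def IsIrreducibleComponent {k : ℕ} (C X : Set (EuclideanSpace ℂ (Fin k))) : Prop :=
  IsIrreducibleAlgebraicCurve C ∧ C ⊆ X ∧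
    ∀ C', IsIrreducibleAlgebraicCurve C' → C' ⊆ X → C ⊆ C' → C' = C

/-- The degree of an algebraic plane curve: the minimal degree of a nonzero polynomial
vanishing identically on it. -/
def curveDegree (X : Set (EuclideanSpace ℂ (Fin 2))) : ℕ :=
  sInf {d | ∃ P : MvPolynomial (Fin 2) ℂ, P ≠ 0 ∧ P.totalDegree = d ∧
    ∀ x ∈ X, MvPolynomial.eval (fun i => x i) P = 0}

lemma aux_points {n s : ℕ} (I : Ideal (MvPolynomial (Fin n) ℂ))
    (g : MvPolynomial (Fin s) ℂ →ₐ[ℂ] (MvPolynomial (Fin n) ℂ ⧸ I))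
    (hinj : Function.Injective g) (hint : g.IsIntegral) (a : Fin s → ℂ) :
    ∃ x : Fin n → ℂ, (∀ f ∈ I, MvPolynomial.eval x f = 0) ∧
      ∀ h f, Ideal.Quotient.mk I f = g h → MvPolynomial.eval x f = MvPolynomial.eval a h := by
  algebraize [g.toRingHom]
  have hker : RingHom.ker (algebraMap (MvPolynomial (Fin s) ℂ) (MvPolynomial (Fin n) ℂ ⧸ I)) = ⊥ :=
    (RingHom.injective_iff_ker_eq_bot _).1 hinj
  obtain ⟨M, hM, hMc⟩ := Ideal.exists_ideal_over_maximal_of_isIntegral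
    (S := MvPolynomial (Fin n) ℂ ⧸ I)
    (MvPolynomial.vanishingIdeal ℂ {a} : Ideal (MvPolynomial (Fin s) ℂ)) (by rw [hker]; exact bot_le)
  have hN : (M.comap (Ideal.Quotient.mk I)).IsMaximal :=
    Ideal.comap_isMaximal_of_surjective _ Ideal.Quotient.mk_surjective
  obtain ⟨x, hx⟩ := MvPolynomial.isMaximal_iff_eq_vanishingIdeal_singleton.1 hN
  have hxm : ∀ f, Ideal.Quotient.mk I f ∈ M → MvPolynomial.eval x f = 0 := by
    intro f hf
    have : f ∈ (MvPolynomial.vanishingIdeal ℂ {x} : Ideal (MvPolynomial (Fin n) ℂ)) := by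
      rw [← hx]; exact hf
    have := (MvPolynomial.mem_vanishingIdeal_singleton_iff x f).1 this
    simpa [MvPolynomial.aeval_eq_eval] using this
  refine ⟨x, fun f hf => hxm f (by rw [Ideal.Quotient.eq_zero_iff_mem.2 hf]; exact M.zero_mem), ?_⟩
  intro h f hf
  have h1 : h - MvPolynomial.C (MvPolynomial.eval a h) ∈
      (MvPolynomial.vanishingIdeal ℂ {a} : Ideal (MvPolynomial (Fin s) ℂ)) := by
    rw [MvPolynomial.mem_vanishingIdeal_singleton_iff]
    simp [MvPolynomial.aeval_eq_eval]
  rw [← hMc] at h1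
  have h2 : g (h - MvPolynomial.C (MvPolynomial.eval a h)) ∈ M := h1
  have h3 := hxm (f - MvPolynomial.C (MvPolynomial.eval a h)) (by
    rw [map_sub, hf]
    convert h2 using 1
    rw [map_sub]
    congr 1
    exact (g.commutes (MvPolynomial.eval a h)).symm)
  simpa [sub_eq_zero] using h3

lemma aux_dep_irred {k : ℕ} {C : Set (EuclideanSpace ℂ (Fin k))}
    (hC : IsIrreducibleAlgebraicCurve C) (u v : MvPolynomial (Fin k) ℂ) :
    ∃ P : MvPolynomial (Fin 2) ℂ, P ≠ 0 ∧ ∀ x ∈ C, MvPolynomial.eval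
      ![MvPolynomial.eval (fun i => x i) u, MvPolynomial.eval (fun i => x i) v] P = 0 := by
  classical
  obtain ⟨⟨S, hS⟩, hinf, hfin⟩ := hC
  let V : Set (Fin k → ℂ) := {y | ∃ x ∈ C, y = fun i => x i}
  let I : Ideal (MvPolynomial (Fin k) ℂ) := MvPolynomial.vanishingIdeal ℂ V
  have hI : ∀ f, f ∈ I ↔ ∀ x ∈ C, MvPolynomial.eval (fun i => x i) f = 0 := by
    intro f
    constructor
    · intro h x hx
      have := (MvPolynomial.mem_vanishingIdeal_iff.1 h) (fun i => x i) ⟨x, hx, rfl⟩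
      simpa [MvPolynomial.aeval_eq_eval] using this
    · intro h
      refine MvPolynomial.mem_vanishingIdeal_iff.2 ?_
      rintro _ ⟨x, hx, rfl⟩
      simpa [MvPolynomial.aeval_eq_eval] using h x hx
  -- cutting by a polynomial not in `I` gives a finite set
  have hcut : ∀ f, f ∉ I → {x ∈ C | MvPolynomial.eval (fun i => x i) f = 0}.Finite := by
    intro f hf
    refine hfin _ ⟨insert f S, ?_⟩ ?_
    · ext x
      simp [hS, and_comm]
    · refine ⟨fun x hx => hx.1, fun hsub => hf ((hI f).2 fun x hx => (hsub hx).2)⟩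
  have hprime : I.IsPrime := by
    refine ⟨?_, ?_⟩
    · intro h
      obtain ⟨x, hx⟩ := hinf.nonempty
      have := (hI 1).1 (by rw [h]; trivial) x hx
      simp at this
    · intro f g hfg
      by_contra hcon
      push Not at hcon
      refine hinf (((hcut f hcon.1).union (hcut g hcon.2)).subset fun x hx => ?_)
      have := (hI _).1 hfg x hx
      rw [map_mul, mul_eq_zero] at this
      rcases this with h | h
      · exact Or.inl ⟨hx, h⟩
      · exact Or.inr ⟨hx, h⟩
  obtain ⟨s, g, hinj, hint⟩ := exists_integral_inj_algHom_of_fg ℂ (MvPolynomial (Fin k) ℂ ⧸ I)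
  have hs : s ≤ 1 := by
    by_contra hs
    push Not at hs
    let i0 : Fin s := ⟨0, by omega⟩
    let i1 : Fin s := ⟨1, hs⟩
    have h01 : i1 ≠ i0 := by simp [i0, i1]
    obtain ⟨f0, hf0⟩ := Ideal.Quotient.mk_surjective (g (MvPolynomial.X i0))
    obtain ⟨f1, hf1⟩ := Ideal.Quotient.mk_surjective (g (MvPolynomial.X i1))
    have hf0I : f0 ∉ I := by
      intro h
      rw [Ideal.Quotient.eq_zero_iff_mem.2 h, eq_comm, ← map_zero g] at hf0
      exact MvPolynomial.X_ne_zero i0 (hinj hf0)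
    have hF := hcut f0 hf0I
    have hall : ∀ b : ℂ, ∃ x ∈ {x ∈ C | MvPolynomial.eval (fun i => x i) f0 = 0},
        MvPolynomial.eval (fun i => x i) f1 = b := by
      intro b
      obtain ⟨x, hx1, hx2⟩ := aux_points I g hinj hint (Function.update 0 i1 b)
      refine ⟨WithLp.toLp 2 x, ⟨?_, ?_⟩, ?_⟩
      · rw [hS]
        intro p hp
        exact hx1 p ((hI p).2 fun y hy => by rw [hS] at hy; exact hy p hp)
      · have := hx2 _ _ hf0
        simpa [h01.symm] using this
      · have := hx2 _ _ hf1
        simpa using this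
    have := (hF.image fun x : EuclideanSpace ℂ (Fin k) =>
      MvPolynomial.eval (fun i => x i) f1).subset
      (t := Set.univ) (fun b _ => by
        obtain ⟨x, hx, hb⟩ := hall b
        exact ⟨x, hx, hb⟩)
    exact Set.infinite_univ this
  have hnot : ¬ AlgebraicIndependent ℂ
      ![Ideal.Quotient.mk I u, Ideal.Quotient.mk I v] := by
    intro hai
    have h2 := hai.lift_cardinalMk_le_trdeg
    algebraize [g.toRingHom]
    have : FaithfulSMul (MvPolynomial (Fin s) ℂ) (MvPolynomial (Fin k) ℂ ⧸ I) :=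
      (faithfulSMul_iff_algebraMap_injective _ _).2 hinj
    have : IsScalarTower ℂ (MvPolynomial (Fin s) ℂ) (MvPolynomial (Fin k) ℂ ⧸ I) :=
      IsScalarTower.of_algebraMap_eq fun x => (g.commutes x).symm
    have h3 := trdeg_add_eq ℂ (MvPolynomial (Fin s) ℂ) (A := MvPolynomial (Fin k) ℂ ⧸ I)
    have h4 : Algebra.trdeg (MvPolynomial (Fin s) ℂ) (MvPolynomial (Fin k) ℂ ⧸ I) = 0 :=
      trdeg_eq_zero
    rw [h4, add_zero, MvPolynomial.trdeg_of_isDomain] at h3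
    rw [← h3] at h2
    simp at h2
    have : (2 : ℕ) ≤ s := by exact_mod_cast h2
    omega
  rw [algebraicIndependent_iff] at hnot
  push Not at hnot
  obtain ⟨P, hP, hP0⟩ := hnot
  refine ⟨P, hP0, fun x hx => ?_⟩
  have h1 : MvPolynomial.aeval ![Ideal.Quotient.mk I u, Ideal.Quotient.mk I v] P =
      Ideal.Quotient.mk I (MvPolynomial.aeval ![u, v] P) := by
    have : ![Ideal.Quotient.mk I u, Ideal.Quotient.mk I v] =
      fun i => Ideal.Quotient.mkₐ ℂ I (![u, v] i) := by
      ext i; fin_cases i <;> rfl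
    rw [this]
    exact (MvPolynomial.comp_aeval_apply (f := ![u,v]) (Ideal.Quotient.mkₐ ℂ I) P).symm
  rw [h1, Ideal.Quotient.eq_zero_iff_mem, hI] at hP
  have h2 := hP x hx
  rw [← MvPolynomial.aeval_eq_eval] at h2 ⊢
  have h3 := MvPolynomial.comp_aeval_apply (f := ![u,v]) (MvPolynomial.aeval (R := ℂ) (fun i => x i)) P
  rw [h3] at h2
  rw [← h2]
  congr 2
  ext i; fin_cases i <;> simp [MvPolynomial.aeval_eq_eval]

lemma aux_dep {k : ℕ} {X : Set (EuclideanSpace ℂ (Fin k))}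
    (hX : IsAlgebraicCurve X) (u v : MvPolynomial (Fin k) ℂ) :
    ∃ P : MvPolynomial (Fin 2) ℂ, P ≠ 0 ∧ ∀ x ∈ X, MvPolynomial.eval
      ![MvPolynomial.eval (fun i => x i) u, MvPolynomial.eval (fun i => x i) v] P = 0 := by
  obtain ⟨F, hF, rfl⟩ := hX
  choose! P hP0 hP using fun C (hC : C ∈ F) => aux_dep_irred (hF C hC) u v
  refine ⟨∏ C ∈ F, P C, Finset.prod_ne_zero_iff.2 fun C hC => hP0 C hC, ?_⟩
  intro x hx
  simp only [mem_iUnion, exists_prop] at hx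
  obtain ⟨C, hC, hxC⟩ := hx
  rw [map_prod]
  exact Finset.prod_eq_zero hC (hP C hC x hxC)


lemma aux_phi {n m : ℕ} {X : Set (EuclideanSpace ℂ (Fin n))}
    {Y : Set (EuclideanSpace ℂ (Fin m))}
    {p : EuclideanSpace ℂ (Fin n)} {q : EuclideanSpace ℂ (Fin m)}
    (hp : p ∈ X) (hq : q ∈ Y) (hqreg : IsRegularPoint Y q)
    (h : GermBiLipschitzEquiv X p Y q) :
    ∃ (φ : ℂ → EuclideanSpace ℂ (Fin n)) (r K : ℝ), 0 < r ∧ 1 ≤ K ∧ φ 0 = p ∧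
      (∀ z ∈ ball (0 : ℂ) r, φ z ∈ X) ∧
      (∀ z ∈ ball (0 : ℂ) r, ∀ z' ∈ ball (0 : ℂ) r,
        ‖φ z - φ z'‖ ≤ K * ‖z - z'‖ ∧ ‖z - z'‖ ≤ K * ‖φ z - φ z'‖) ∧
      ∀ᶠ x in nhdsWithin p X, ∃ z ∈ ball (0 : ℂ) r, φ z = x := by
  obtain ⟨U', D, γ, hU'o, hqU', hDo, hγd, hγi, hγ0, -, hγim, hγc, σ, hσc, hσ⟩ := hqreg
  obtain ⟨U, V, hUo, hVo, hpU, hqV, f, ⟨hbij, C, hC1, hC⟩, hfp⟩ := h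
  obtain ⟨z0, hz0, hz0q⟩ : q ∈ γ '' D := by rw [hγim]; exact ⟨hq, hqU'⟩
  have hC0 : 0 < C := by linarith
  have hstr : HasStrictDerivAt γ (deriv γ z0) z0 :=
    ((hγd.analyticAt (hDo.mem_nhds hz0)).hasStrictDerivAt)
  set a := deriv γ z0 with ha
  have ha0 : 0 < ‖a‖ := norm_pos_iff.2 (hγ0 z0 hz0)
  have hlo := hstr.hasStrictFDerivAt.isLittleO.def (half_pos ha0)
  rw [nhds_prod_eq] at hlo
  obtain ⟨t, ht, htlo⟩ := Filter.eventually_prod_self_iff'.1 hlo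
  have hV : γ ⁻¹' V ∈ nhds z0 :=
    (hγc.continuousAt (hDo.mem_nhds hz0)).preimage_mem_nhds (hVo.mem_nhds (hz0q ▸ hqV))
  obtain ⟨r, hr, hrsub⟩ := Metric.mem_nhds_iff.1
    (Filter.inter_mem (Filter.inter_mem (hDo.mem_nhds hz0) hV) ht)
  have hmem : ∀ z ∈ ball (0 : ℂ) r, z0 + z ∈ ball z0 r := by
    intro z hz; simpa using hz
  have hYV : ∀ z ∈ ball (0 : ℂ) r, γ (z0 + z) ∈ Y ∩ V := by
    intro z hz
    have h1 := hrsub (hmem z hz)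
    have h2 : γ (z0 + z) ∈ Y ∩ U' := hγim ▸ mem_image_of_mem γ h1.1.1
    exact ⟨h2.1, h1.1.2⟩
  set φ : ℂ → EuclideanSpace ℂ (Fin n) := fun z => Function.invFunOn f (X ∩ U) (γ (z0 + z)) with hφ
  have hφX : ∀ z ∈ ball (0 : ℂ) r, φ z ∈ X ∩ U := fun z hz =>
    Function.invFunOn_mem (hbij.surjOn (hYV z hz))
  have hfφ : ∀ z ∈ ball (0 : ℂ) r, f (φ z) = γ (z0 + z) := fun z hz =>
    Function.invFunOn_eq (hbij.surjOn (hYV z hz))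
  have hφu : ∀ z ∈ ball (0 : ℂ) r, ∀ x ∈ X ∩ U, f x = γ (z0 + z) → φ z = x := by
    intro z hz x hx hfx
    exact hbij.injOn (hφX z hz) hx (by rw [hfφ z hz, hfx])
  have hlip : ∀ z ∈ ball (0 : ℂ) r, ∀ z' ∈ ball (0 : ℂ) r,
      ‖γ (z0 + z) - γ (z0 + z')‖ ≤ 2 * ‖a‖ * ‖z - z'‖ ∧
      ‖a‖ / 2 * ‖z - z'‖ ≤ ‖γ (z0 + z) - γ (z0 + z')‖ := by
    intro z hz z' hz'
    have h1 := htlo _ (hrsub (hmem z hz)).2 _ (hrsub (hmem z' hz')).2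
    try simp only [add_sub_add_left_eq_sub] at h1
    have h2 : ‖(z - z') • a‖ = ‖a‖ * ‖z - z'‖ := by rw [norm_smul, mul_comm]
    have h1' : ‖γ (z0 + z) - γ (z0 + z') - (z - z') • a‖ ≤ ‖a‖ / 2 * ‖z - z'‖ := by
      simpa using h1
    have h3 := norm_sub_norm_le (γ (z0 + z) - γ (z0 + z')) ((z - z') • a)
    have h4 := norm_sub_norm_le ((z - z') • a) (γ (z0 + z) - γ (z0 + z'))
    rw [norm_sub_rev ((z - z') • a)] at h4
    have : 0 ≤ ‖a‖ * ‖z - z'‖ := by positivity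
    constructor <;> nlinarith
  refine ⟨φ, r, max 1 (max (C * (2 * ‖a‖)) (C * (2 / ‖a‖))), hr, le_max_left _ _,
    hφu 0 (by simpa using hr) p ⟨hp, hpU⟩ (by simp [hfp, hz0q]), fun z hz => (hφX z hz).1, ?_, ?_⟩
  · intro z hz z' hz'
    obtain ⟨h1, h2⟩ := hC _ (hφX z hz) _ (hφX z' hz')
    obtain ⟨h3, h4⟩ := hlip z hz z' hz'
    rw [hfφ z hz, hfφ z' hz'] at h1 h2
    rw [inv_mul_le_iff₀ hC0] at h1
    constructor
    · calc ‖φ z - φ z'‖ ≤ C * ‖γ (z0 + z) - γ (z0 + z')‖ := h1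
        _ ≤ C * (2 * ‖a‖ * ‖z - z'‖) := by gcongr
        _ = C * (2 * ‖a‖) * ‖z - z'‖ := by ring
        _ ≤ _ := by
          gcongr
          exact (le_max_left _ _).trans (le_max_right _ _)
    · calc ‖z - z'‖ = 2 / ‖a‖ * (‖a‖ / 2 * ‖z - z'‖) := by field_simp
        _ ≤ 2 / ‖a‖ * (C * ‖φ z - φ z'‖) := mul_le_mul_of_nonneg_left (h4.trans h2) (by positivity)
        _ = C * (2 / ‖a‖) * ‖φ z - φ z'‖ := by ring
        _ ≤ _ := by
          gcongr
          exact (le_max_right _ _).trans (le_max_right _ _)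
  · have hXU : ∀ᶠ x in nhdsWithin p X, x ∈ X ∩ U := by
      filter_upwards [self_mem_nhdsWithin, mem_nhdsWithin_of_mem_nhds (hUo.mem_nhds hpU)] with x h1 h2
        using ⟨h1, h2⟩
    have hft : Filter.Tendsto f (nhdsWithin p X) (nhds q) := by
      rw [tendsto_iff_norm_sub_tendsto_zero]
      have h0 : Filter.Tendsto (fun x => C * ‖x - p‖) (nhdsWithin p X) (nhds 0) := by
        have : Filter.Tendsto (fun x => C * ‖x - p‖) (nhds p) (nhds (C * ‖p - p‖)) := by
          apply Continuous.tendsto; fun_prop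
        simp only [sub_self, norm_zero, mul_zero] at this
        exact this.mono_left nhdsWithin_le_nhds
      refine squeeze_zero' (Filter.Eventually.of_forall fun x => norm_nonneg _) ?_ h0
      filter_upwards [hXU] with x hx
      rw [← hfp]
      exact (hC x hx p ⟨hp, hpU⟩).2
    have hYU : ∀ᶠ x in nhdsWithin p X, f x ∈ Y ∩ U' := by
      filter_upwards [hXU, hft (hU'o.mem_nhds hqU')] with x hx hx2
      exact ⟨(hbij.mapsTo hx).1, hx2⟩
    have hσt : Filter.Tendsto (fun x => σ (f x)) (nhdsWithin p X) (nhds z0) := by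
      have h1 : Filter.Tendsto σ (nhdsWithin q (Y ∩ U')) (nhds z0) := by
        have := hσc q ⟨hq, hqU'⟩
        have h2 : σ q = z0 := by rw [← hz0q]; exact hσ z0 hz0
        rw [ContinuousWithinAt, h2] at this
        exact this
      exact h1.comp (tendsto_nhdsWithin_iff.2 ⟨hft, hYU⟩)
    filter_upwards [hσt (ball_mem_nhds z0 hr), hYU, hXU] with x h1 h2 h3
    have h1' : σ (f x) - z0 ∈ ball (0 : ℂ) r := by
      simpa [dist_eq_norm] using h1
    refine ⟨σ (f x) - z0, h1', hφu _ h1' x h3 ?_⟩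
    rw [← hγim] at h2
    obtain ⟨z, hz, hzx⟩ := h2
    rw [← hzx, hσ z hz, add_sub_cancel]


lemma aux_punct (r : ℝ) (hr : 0 < r) : IsPreconnected {z : ℂ | z ≠ 0 ∧ ‖z‖ < r} := by
  have h1 : IsPreconnected {z : ℂ | z.re < Real.log r} := by
    have : Convex ℝ {z : ℂ | z.re < Real.log r} := convex_halfSpace_re_lt _
    exact this.isPreconnected
  have h2 : Complex.exp '' {z : ℂ | z.re < Real.log r} = {z : ℂ | z ≠ 0 ∧ ‖z‖ < r} := by
    ext z
    constructor
    · rintro ⟨w, hw, rfl⟩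
      refine ⟨Complex.exp_ne_zero w, ?_⟩
      rw [Complex.norm_exp]
      exact (Real.lt_log_iff_exp_lt hr).1 hw
    · rintro ⟨hz, hzr⟩
      refine ⟨Complex.log z, ?_, Complex.exp_log hz⟩
      simp only [mem_ofPred_eq, Complex.log_re]
      exact Real.log_lt_log (norm_pos_iff.2 hz) hzr
  rw [← h2]
  exact h1.image _ Complex.continuous_exp.continuousOn


lemma aux_biv (P : MvPolynomial (Fin 2) ℂ) :
    ∃ R : Polynomial (Polynomial ℂ), ∀ w t : ℂ,
      R.evalEval w t = MvPolynomial.eval ![w, t] P := by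
  refine ⟨MvPolynomial.aeval ![Polynomial.C Polynomial.X, Polynomial.X] P, fun w t => ?_⟩
  induction P using MvPolynomial.induction_on with
  | C a => simp [Polynomial.algebraMap_apply]
  | add f g hf hg => simp only [map_add, Polynomial.evalEval_add, hf, hg]
  | mul_X f i hf =>
    rw [map_mul, Polynomial.evalEval_mul, hf, map_mul]
    congr 1
    fin_cases i <;> simp [Polynomial.evalEval_C]

lemma aux_monic (P : MvPolynomial (Fin 2) ℂ) (hP : P ≠ 0) :
    ∃ (Q : Polynomial (Polynomial ℂ)) (b c : Polynomial ℂ), Q.Monic ∧ c ≠ 0 ∧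
      (∀ w, c.eval w ≠ 0 → b.eval w ≠ 0) ∧
      (∀ w t, MvPolynomial.eval ![w, t] P = 0 → Q.evalEval w (b.eval w * t) = 0) ∧
      (∀ w y, c.eval w ≠ 0 → Q.evalEval w y = 0 → (Polynomial.derivative Q).evalEval w y ≠ 0) := by
  obtain ⟨R, hR⟩ := aux_biv P
  have hR0 : R ≠ 0 := by
    rintro rfl
    apply hP
    apply MvPolynomial.funext
    intro x
    have := hR (x 0) (x 1)
    rw [Polynomial.evalEval_zero] at this
    rw [map_zero, this]
    congr 1
    congr 1
    ext i; fin_cases i <;> rfl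
  set P1 := R * Polynomial.X with hP1
  have hP10 : P1 ≠ 0 := mul_ne_zero hR0 Polynomial.X_ne_zero
  have hdeg : 1 ≤ P1.natDegree := by
    rw [hP1, Polynomial.natDegree_mul_X hR0]; omega
  set Q1 := Polynomial.integralNormalization P1 with hQ1
  have hQ1m : Q1.Monic := Polynomial.monic_integralNormalization hP10
  let K := FractionRing (Polynomial ℂ)
  let ι := algebraMap (Polynomial ℂ) K
  have hι : Function.Injective ι := IsFractionRing.injective _ _
  have hQ1K : Q1.map ι ≠ 0 := (hQ1m.map ι).ne_zero
  obtain ⟨g, hg⟩ := IsIntegrallyClosed.eq_map_mul_C_of_dvd K hQ1m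
    (UniqueFactorizationMonoid.radical_dvd_self (a := Q1.map ι))
  obtain ⟨N, hN⟩ := UniqueFactorizationMonoid.exists_dvd_radical_self_pow hQ1K
  have hsq := UniqueFactorizationMonoid.squarefree_radical (a := Q1.map ι)
  set rad := UniqueFactorizationMonoid.radical (Q1.map ι) with hrad
  have hrad0 : rad ≠ 0 := UniqueFactorizationMonoid.radical_ne_zero
  have hlc : rad.leadingCoeff ≠ 0 := Polynomial.leadingCoeff_ne_zero.2 hrad0
  have hgm : g.Monic := by
    have h1 := congrArg Polynomial.leadingCoeff hg
    rw [Polynomial.leadingCoeff_mul, Polynomial.leadingCoeff_C, mul_eq_right₀ hlc] at h1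
    rw [Polynomial.leadingCoeff_map_of_injective hι] at h1
    exact hι (by rw [h1, map_one])
  have hgsep : (g.map ι).Separable := by
    rw [PerfectField.separable_iff_squarefree]
    exact hsq.squarefree_of_dvd ⟨_, hg.symm⟩
  have hdvd : Q1 ∣ g ^ N := by
    rw [← Polynomial.map_dvd_map ι hι hQ1m, Polynomial.map_pow]
    refine hN.trans (pow_dvd_pow_of_dvd ?_ N)
    refine ⟨Polynomial.C rad.leadingCoeff⁻¹, ?_⟩
    have h1 : g.map ι = (g.map ι * Polynomial.C rad.leadingCoeff) *
        Polynomial.C rad.leadingCoeff⁻¹ := by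
      rw [mul_assoc, ← Polynomial.C_mul, mul_inv_cancel₀ hlc, Polynomial.C_1, mul_one]
    exact h1.trans (congrArg (· * Polynomial.C rad.leadingCoeff⁻¹) hg)
  obtain ⟨u, v, huv⟩ := hgsep
  obtain ⟨du, hdum, hdu⟩ := IsLocalization.integerNormalization_spec (nonZeroDivisors (Polynomial ℂ)) u
  obtain ⟨dv, hdvm, hdv⟩ := IsLocalization.integerNormalization_spec (nonZeroDivisors (Polynomial ℂ)) v
  set u' := IsLocalization.integerNormalization (nonZeroDivisors (Polynomial ℂ)) u
  set v' := IsLocalization.integerNormalization (nonZeroDivisors (Polynomial ℂ)) v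
  have hdu0 : du ≠ 0 := nonZeroDivisors.ne_zero hdum
  have hdv0 : dv ≠ 0 := nonZeroDivisors.ne_zero hdvm
  have hbez : Polynomial.C dv * u' * g +
      Polynomial.C du * v' * Polynomial.derivative g =
      Polynomial.C (du * dv) := by
    apply Polynomial.map_injective ι hι
    rw [Polynomial.derivative_map] at huv
    simp only [Polynomial.map_add, Polynomial.map_mul, Polynomial.map_C]
    have e1 : u'.map ι = Polynomial.C (ι du) * u := by
      rw [hdu, algebra_compatible_smul K, Polynomial.smul_eq_C_mul]
    have e2 : v'.map ι = Polynomial.C (ι dv) * v := by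
      rw [hdv, algebra_compatible_smul K, Polynomial.smul_eq_C_mul]
    rw [e1, e2, map_mul, Polynomial.C_mul]
    linear_combination (Polynomial.C (ι du) * Polynomial.C (ι dv)) * huv
  refine ⟨g, P1.leadingCoeff, du * dv * P1.leadingCoeff, hgm, ?_, ?_, ?_, ?_⟩
  · exact mul_ne_zero (mul_ne_zero hdu0 hdv0) (Polynomial.leadingCoeff_ne_zero.2 hP10)
  · intro w hw
    rw [Polynomial.eval_mul] at hw
    exact right_ne_zero_of_mul hw
  · intro w t ht
    have h1 := Polynomial.integralNormalization_eval₂_leadingCoeff_mul hdeg (Polynomial.evalRingHom w) t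
    rw [Polynomial.eval₂_evalRingHom, hP1, Polynomial.evalEval_mul, hR, ht, zero_mul, mul_zero,
      ← hP1] at h1
    have h2 := Polynomial.evalEval_dvd w (P1.leadingCoeff.eval w * t) hdvd
    rw [Polynomial.evalEval_pow] at h2
    have h3 : Q1.evalEval w (P1.leadingCoeff.eval w * t) = 0 := h1
    rw [h3, zero_dvd_iff] at h2
    exact eq_zero_of_pow_eq_zero h2
  · intro w y hw hy hd
    have := congrArg (Polynomial.evalEval w y) hbez
    simp only [Polynomial.evalEval_add, Polynomial.evalEval_mul, hy, hd, mul_zero, add_zero,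
      Polynomial.evalEval_C] at this
    rw [Polynomial.eval_mul, ← this] at hw
    simp at hw


lemma aux_evsum (Q : Polynomial (Polynomial ℂ)) (w y : ℂ) :
    Q.evalEval w y = ∑ i ∈ Finset.range (Q.natDegree + 1), (Q.coeff i).eval w * y ^ i := by
  rw [Polynomial.evalEval, Polynomial.eval_eq_sum_range (p := Q), Polynomial.eval_finsetSum]
  simp

lemma aux_evdiff (Q : Polynomial (Polynomial ℂ)) :
    ContDiff ℂ 1 fun w : ℂ × ℂ => Q.evalEval w.1 w.2 := by
  simp only [aux_evsum]
  refine ContDiff.sum fun i _ => ?_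
  refine ContDiff.mul ?_ (contDiff_snd.pow i)
  have h : ContDiff ℂ 1 fun x : ℂ => (Q.coeff i).eval x := by
    simpa using (Polynomial.contDiff_aeval (R := ℂ) (𝕜 := ℂ) (Q.coeff i) 1)
  exact h.comp contDiff_fst

lemma aux_evder (Q : Polynomial (Polynomial ℂ)) (w y : ℂ) :
    fderiv ℂ (fun w : ℂ × ℂ => Q.evalEval w.1 w.2) (w, y) (0, 1) =
      (Polynomial.derivative Q).evalEval w y := by
  have h1 : HasFDerivAt (fun w : ℂ × ℂ => Q.evalEval w.1 w.2)
    (fderiv ℂ (fun w : ℂ × ℂ => Q.evalEval w.1 w.2) (w, y)) (w, y) :=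
    ((aux_evdiff Q).differentiable (by simp)).differentiableAt.hasFDerivAt
  have h2 : HasDerivAt (fun t : ℂ => (w, t)) ((0, 1) : ℂ × ℂ) y :=
    (hasDerivAt_const y w).prodMk (hasDerivAt_id y)
  have h3 := h1.comp_hasDerivAt y h2
  have h4 : HasDerivAt (fun t : ℂ => (Q.map (Polynomial.evalRingHom w)).eval t)
    ((Polynomial.derivative (Q.map (Polynomial.evalRingHom w))).eval y) y :=
    Polynomial.hasDerivAt _ y
  rw [Polynomial.derivative_map, Polynomial.map_evalRingHom_eval] at h4
  refine h3.unique ?_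
  have h5 : (fun t : ℂ => (Q.map (Polynomial.evalRingHom w)).eval t) =
      (fun w : ℂ × ℂ => Q.evalEval w.1 w.2) ∘ Prod.mk w := by
    funext t
    simp [Polynomial.map_evalRingHom_eval]
  rw [h5] at h4
  exact h4


structure AuxPhi {n : ℕ} (X : Set (EuclideanSpace ℂ (Fin n))) (p : EuclideanSpace ℂ (Fin n))
    (φ : ℂ → EuclideanSpace ℂ (Fin n)) (r K : ℝ) : Prop where
  hr : 0 < r
  hK : 1 ≤ K
  h0 : φ 0 = p
  hX : ∀ z ∈ ball (0 : ℂ) r, φ z ∈ X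
  hL : ∀ z ∈ ball (0 : ℂ) r, ∀ z' ∈ ball (0 : ℂ) r,
        ‖φ z - φ z'‖ ≤ K * ‖z - z'‖ ∧ ‖z - z'‖ ≤ K * ‖φ z - φ z'‖
  hS : ∀ᶠ x in nhdsWithin p X, ∃ z ∈ ball (0 : ℂ) r, φ z = x

lemma AuxPhi.cont {n : ℕ} {X : Set (EuclideanSpace ℂ (Fin n))} {p : EuclideanSpace ℂ (Fin n)}
    {φ : ℂ → EuclideanSpace ℂ (Fin n)} {r K : ℝ} (h : AuxPhi X p φ r K) :
    ContinuousOn φ (ball 0 r) := by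
  have : LipschitzOnWith (Real.toNNReal K) φ (ball 0 r) := by
    apply LipschitzOnWith.of_dist_le_mul
    intro x hx y hy
    rw [dist_eq_norm, dist_eq_norm, Real.coe_toNNReal _ (by linarith [h.hK])]
    exact (h.hL x hx y hy).1
  exact this.continuousOn

lemma AuxPhi.ev {n : ℕ} {X : Set (EuclideanSpace ℂ (Fin n))} {p : EuclideanSpace ℂ (Fin n)}
    {φ : ℂ → EuclideanSpace ℂ (Fin n)} {r K : ℝ} (h : AuxPhi X p φ r K)
    {Q : EuclideanSpace ℂ (Fin n) → Prop} (hQ : ∀ᶠ z in nhds 0, Q (φ z)) :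
    ∀ᶠ x in nhdsWithin p X, Q x := by
  obtain ⟨d, hd, hdQ⟩ := Metric.eventually_nhds_iff_ball.1 hQ
  have hK0 : 0 < K := by linarith [h.hK]
  have h1 : ∀ᶠ x in nhdsWithin p X, ‖x - p‖ < d / K := by
    apply eventually_nhdsWithin_of_eventually_nhds
    filter_upwards [ball_mem_nhds p (div_pos hd hK0)] with x hx
    simpa [dist_eq_norm] using hx
  filter_upwards [h1, h.hS] with x hx ⟨z, hz, hzx⟩
  rw [← hzx]
  apply hdQ
  have h2 := (h.hL z hz 0 (by simpa using h.hr)).2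
  rw [h.h0, hzx, sub_zero] at h2
  rw [mem_ball_zero_iff]
  calc ‖z‖ ≤ K * ‖x - p‖ := h2
    _ < K * (d / K) := by gcongr
    _ = d := by field_simp

lemma aux_tpoly (P : MvPolynomial (Fin 2) ℂ) (hP : P ≠ 0) :
    ∃ R : Polynomial (Polynomial ℂ), R.coeff 0 ≠ 0 ∧
      ∀ a b : ℂ, b ≠ 0 → MvPolynomial.eval ![a, b] P = 0 → R.evalEval (a / b) b = 0 := by
  set S : Polynomial (Polynomial ℂ) :=
    MvPolynomial.aeval ![Polynomial.C Polynomial.X * Polynomial.X, Polynomial.X] P with hS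
  have hSe : ∀ t b : ℂ, S.evalEval t b = MvPolynomial.eval ![t * b, b] P := by
    intro t b
    rw [hS]
    clear hS S hP
    induction P using MvPolynomial.induction_on with
    | C a => simp [Polynomial.algebraMap_apply]
    | add f g hf hg => simp only [map_add, Polynomial.evalEval_add, hf, hg]
    | mul_X f i hf =>
      rw [map_mul, Polynomial.evalEval_mul, hf, map_mul]
      congr 1
      fin_cases i <;> simp [Polynomial.evalEval_C, Polynomial.evalEval_mul]
  have hS0 : S ≠ 0 := by
    intro h0
    have : MvPolynomial.X 1 * P = 0 := by
      apply MvPolynomial.funext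
      intro x
      rw [map_mul, map_zero, MvPolynomial.eval_X, mul_eq_zero]
      by_cases hx : x 1 = 0
      · exact Or.inl hx
      · right
        have := hSe (x 0 / x 1) (x 1)
        rw [h0, Polynomial.evalEval_zero, div_mul_cancel₀ _ hx] at this
        rw [this]
        congr 1
        congr 1
        ext i; fin_cases i <;> rfl
    rcases mul_eq_zero.1 this with h | h
    · exact MvPolynomial.X_ne_zero _ h
    · exact hP h
  obtain ⟨R, hR, hRd⟩ := Polynomial.exists_eq_pow_rootMultiplicity_mul_and_not_dvd S hS0 0
  rw [Polynomial.C_0, sub_zero] at hR hRd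
  refine ⟨R, fun h => hRd (Polynomial.X_dvd_iff.2 h), ?_⟩
  intro a b hb hab
  have h1 := hSe (a / b) b
  rw [div_mul_cancel₀ _ hb, hab, hR, Polynomial.evalEval_mul, Polynomial.evalEval_pow,
    Polynomial.evalEval_X] at h1
  exact (mul_eq_zero.1 h1).resolve_left (pow_ne_zero _ hb)

lemma aux_conv {T : Type*} [TopologicalSpace T] [T2Space T] (M : ℂ → T) (r : ℝ) (hr : 0 < r)
    (hM : ContinuousOn M {z : ℂ | z ≠ 0 ∧ ‖z‖ < r}) (S : Set T) (hS : IsCompact S)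
    (hMS : ∀ z : ℂ, z ≠ 0 → ‖z‖ < r → M z ∈ S) (F : Set T) (hF : F.Finite)
    (hc : ∀ L, MapClusterPt L (nhdsWithin 0 {0}ᶜ) M → L ∈ F) :
    ∃ L, Filter.Tendsto M (nhdsWithin 0 {0}ᶜ) (nhds L) := by
  have hev : ∀ r' : ℝ, 0 < r' → ∀ᶠ z : ℂ in nhdsWithin 0 {0}ᶜ, z ≠ 0 ∧ ‖z‖ < r' := by
    intro r' hr'
    filter_upwards [self_mem_nhdsWithin, mem_nhdsWithin_of_mem_nhds (ball_mem_nhds (0:ℂ) hr')]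
      with z h1 h2
    exact ⟨h1, by simpa using h2⟩
  have hevS : ∀ᶠ z in nhdsWithin (0:ℂ) {0}ᶜ, M z ∈ S := by
    filter_upwards [hev r hr] with z hz using hMS z hz.1 hz.2
  obtain ⟨U, hU, hUd⟩ := hF.t2_separation
  have h1 : ∀ᶠ z in nhdsWithin (0:ℂ) {0}ᶜ, M z ∈ ⋃ L ∈ F, U L := by
    have h2 : Filter.map M (nhdsWithin (0:ℂ) {0}ᶜ) ≤ nhdsSet F :=
      hS.le_nhdsSet_of_clusterPt hevS (fun x _ hx => hc x hx)
    apply h2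
    exact bUnion_mem_nhdsSet fun L _ => (hU L).2.mem_nhds (hU L).1
  rw [eventually_nhdsWithin_iff, Metric.eventually_nhds_iff_ball] at h1
  obtain ⟨d, hd, hdU⟩ := h1
  set d' := min d r with hd'
  have hd'0 : 0 < d' := lt_min hd hr
  have hconn := (aux_punct d' hd'0).image M (hM.mono fun z hz => ⟨hz.1, hz.2.trans_le (min_le_right _ _)⟩)
  have hsub : M '' {z : ℂ | z ≠ 0 ∧ ‖z‖ < d'} ⊆ ⋃ L ∈ F, U L := by
    rintro _ ⟨z, hz, rfl⟩
    exact hdU z (by simpa using hz.2.trans_le (min_le_left _ _)) hz.1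
  obtain ⟨z0, hz0⟩ : ∃ z : ℂ, z ≠ 0 ∧ ‖z‖ < d' := (hev d' hd'0).exists
  obtain ⟨L0, hL0, hz0L⟩ : ∃ L ∈ F, M z0 ∈ U L := by
    simpa using hsub (mem_image_of_mem M hz0)
  have hsub2 : M '' {z : ℂ | z ≠ 0 ∧ ‖z‖ < d'} ⊆ U L0 := by
    refine hconn.subset_left_of_subset_union (hU L0).2
      (v := ⋃ L ∈ F \ {L0}, U L) (isOpen_biUnion fun L _ => (hU L).2) ?_ ?_
      ⟨M z0, mem_image_of_mem M hz0, hz0L⟩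
    · rw [Set.disjoint_iUnion₂_right]
      intro L hL
      exact hUd hL0 hL.1 (fun h => hL.2 h.symm)
    · intro y hy
      obtain ⟨L, hL, hyL⟩ : ∃ L ∈ F, y ∈ U L := by simpa using hsub hy
      by_cases h : L = L0
      · left; rw [← h]; exact hyL
      · right; exact mem_biUnion (⟨hL, h⟩ : L ∈ F \ {L0}) hyL
  refine ⟨L0, hS.tendsto_nhds_of_unique_mapClusterPt hevS ?_⟩
  intro L _ hL
  by_contra hne
  have h3 := hL.frequently ((hU L).2.mem_nhds (hU L).1)
  obtain ⟨z, hz1, hz2⟩ := (h3.and_eventually (hev d' hd'0)).exists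
  exact Set.disjoint_left.1 (hUd (hc L hL) hL0 hne) hz1 (hsub2 (mem_image_of_mem M hz2))


lemma aux_tangent {n : ℕ} {X : Set (EuclideanSpace ℂ (Fin n))} (hX : IsAlgebraicCurve X)
    {p : EuclideanSpace ℂ (Fin n)} {φ : ℂ → EuclideanSpace ℂ (Fin n)} {r K : ℝ}
    (h : AuxPhi X p φ r K) :
    ∃ (j : Fin n) (ρ : Fin n → ℂ), ∀ ε : ℝ, 0 < ε → ∀ᶠ x in nhdsWithin p X, ∀ i,
      ‖(x i - p i) - ρ i * (x j - p j)‖ ≤ ε * ‖x j - p j‖ := by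
  have hdep := fun i j : Fin n => aux_dep hX (MvPolynomial.X i - MvPolynomial.C (p i))
    (MvPolynomial.X j - MvPolynomial.C (p j))
  choose P hP0 hP using hdep
  simp only [map_sub, MvPolynomial.eval_X, MvPolynomial.eval_C] at hP
  have hR := fun i j => aux_tpoly (P i j) (hP0 i j)
  choose R hR0 hR using hR
  set v : ℂ → Fin n → ℂ := fun z i => φ z i - p i with hv
  set N : ℂ → ℂ := fun z => ∑ c, v z c * (starRingEnd ℂ) (v z c) with hN
  have hNn : ∀ z, N z = ((‖φ z - p‖ ^ 2 : ℝ) : ℂ) := by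
    intro z
    simp only [hN, hv, Complex.mul_conj, EuclideanSpace.norm_sq_eq, Complex.normSq_eq_norm_sq]
    push_cast
    rfl
  set M : ℂ → Fin n → Fin n → ℂ := fun z a b => v z a * (starRingEnd ℂ) (v z b) / N z with hM
  have hN0 : ∀ z, z ≠ 0 → ‖z‖ < r → N z ≠ 0 := by
    intro z hz hzr
    rw [hNn]
    have h1 := (h.hL z (by simpa using hzr) 0 (by simpa using h.hr)).2
    rw [h.h0, sub_zero] at h1
    have h2 : 0 < ‖z‖ := norm_pos_iff.2 hz
    have h3 : ‖φ z - p‖ ≠ 0 := by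
      intro h0; rw [h0] at h1; linarith
    exact_mod_cast pow_ne_zero 2 h3
  have hev : ∀ᶠ z : ℂ in nhdsWithin 0 {0}ᶜ, z ≠ 0 ∧ ‖z‖ < r := by
    filter_upwards [self_mem_nhdsWithin, mem_nhdsWithin_of_mem_nhds (ball_mem_nhds (0:ℂ) h.hr)]
      with z h1 h2
    exact ⟨h1, by simpa using h2⟩
  have hvc : ∀ a, ContinuousOn (fun z => v z a) {z : ℂ | z ≠ 0 ∧ ‖z‖ < r} := by
    intro a
    have h1 : ContinuousOn φ {z : ℂ | z ≠ 0 ∧ ‖z‖ < r} :=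
      h.cont.mono fun z hz => by simpa using hz.2
    simp only [hv]
    fun_prop
  have hMc : ContinuousOn M {z : ℂ | z ≠ 0 ∧ ‖z‖ < r} := by
    refine continuousOn_pi.2 fun a => continuousOn_pi.2 fun b => ?_
    have hstar : ∀ a, ContinuousOn (fun z => (starRingEnd ℂ) (v z a)) {z : ℂ | z ≠ 0 ∧ ‖z‖ < r} :=
      fun a => Complex.continuous_conj.comp_continuousOn (hvc a)
    refine ContinuousOn.div ((hvc a).mul (hstar b)) ?_ fun z hz => hN0 z hz.1 hz.2
    exact continuousOn_finsetSum _ fun c _ => (hvc c).mul (hstar c)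
  have hvt : ∀ a, Filter.Tendsto (fun z => v z a) (nhds 0) (nhds 0) := by
    intro a
    have h1 : ContinuousAt φ 0 := h.cont.continuousAt (ball_mem_nhds _ h.hr)
    have h2 : ContinuousAt (fun z => v z a) 0 := by simp only [hv]; fun_prop
    have h3 : v 0 a = 0 := by simp [hv, h.h0]
    have := h2.tendsto
    rwa [h3] at this
  -- algebraic properties
  have hMtr : ∀ z, z ≠ 0 → ‖z‖ < r → ∑ a, M z a a = 1 := by
    intro z hz hzr
    simp only [hM]
    rw [← Finset.sum_div]
    exact div_self (hN0 z hz hzr)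
  have hMrk : ∀ z a b j, M z a b * M z j j = M z a j * M z j b := by
    intro z a b j; simp only [hM]; ring
  have hMconj : ∀ z a b, (starRingEnd ℂ) (M z a b) = M z b a := by
    intro z a b
    simp only [hM, map_div₀, map_mul, Complex.conj_conj]
    rw [hNn, Complex.conj_ofReal, mul_comm]
  have hMbd : ∀ z, M z ∈ closedBall (0 : Fin n → Fin n → ℂ) 1 := by
    intro z
    rw [mem_closedBall_zero_iff, pi_norm_le_iff_of_nonneg zero_le_one]
    intro a
    rw [pi_norm_le_iff_of_nonneg zero_le_one]
    intro b
    have h1 : ∀ a, ‖v z a‖ ≤ ‖φ z - p‖ := fun a => PiLp.norm_apply_le (φ z - p) a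
    simp only [hM]
    rw [norm_div, norm_mul, RCLike.norm_conj, hNn, Complex.norm_real, Real.norm_of_nonneg (by positivity)]
    apply div_le_one_of_le₀ _ (by positivity)
    rw [pow_two]
    exact mul_le_mul (h1 a) (h1 b) (norm_nonneg _) (norm_nonneg _)
  have hMdiv : ∀ z i j, M z j j ≠ 0 → v z j ≠ 0 ∧ v z i / v z j = M z i j / M z j j := by
    intro z i j hz
    simp only [hM] at hz ⊢
    rw [div_ne_zero_iff, mul_ne_zero_iff] at hz
    obtain ⟨⟨h1, h2⟩, h3⟩ := hz
    refine ⟨h1, ?_⟩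
    field_simp
  -- cluster points
  set G : (Fin n → ℂ) → (Fin n → Fin n → ℂ) := fun ρ a b =>
    ρ a * (starRingEnd ℂ) (ρ b) / ∑ c, ρ c * (starRingEnd ℂ) (ρ c) with hG
  set F : Set (Fin n → Fin n → ℂ) := ⋃ j : Fin n, G '' (Set.pi univ fun i => {t | ((R i j).coeff 0).eval t = 0})
    with hF
  have hFfin : F.Finite := by
    refine Set.finite_iUnion fun j => Set.Finite.image _ (Set.Finite.pi fun i => ?_)
    exact Polynomial.finite_setOfPred_isRoot (hR0 i j)
  have hcl : ∀ L, MapClusterPt L (nhdsWithin 0 {0}ᶜ) M → L ∈ F := by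
    intro L hL
    obtain ⟨V, hVl, hVt⟩ := mapClusterPt_iff_ultrafilter.1 hL
    have hVt' : ∀ a b, Filter.Tendsto (fun z => M z a b) V (nhds (L a b)) := fun a b =>
      (tendsto_pi_nhds.1 (tendsto_pi_nhds.1 hVt a) b)
    have hVev := hVl hev
    have hLtr : ∑ a, L a a = 1 := by
      refine tendsto_nhds_unique (tendsto_finsetSum _ fun a _ => hVt' a a) ?_
      refine tendsto_const_nhds.congr' ?_
      filter_upwards [hVev] with z hz using (hMtr z hz.1 hz.2).symm
    have hLrk : ∀ a b j, L a b * L j j = L a j * L j b := by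
      intro a b j
      refine tendsto_nhds_unique ((hVt' a b).mul (hVt' j j)) ?_
      refine ((hVt' a j).mul (hVt' j b)).congr fun z => (hMrk z a b j).symm
    have hLconj : ∀ a b, (starRingEnd ℂ) (L a b) = L b a := by
      intro a b
      refine tendsto_nhds_unique ((Complex.continuous_conj.tendsto _).comp (hVt' a b)) ?_
      exact (hVt' b a).congr fun z => (hMconj z a b).symm
    obtain ⟨j, hj⟩ : ∃ j, L j j ≠ 0 := by
      by_contra! hcon
      simp [hcon] at hLtr
    refine mem_iUnion.2 ⟨j, fun i => L i j / L j j, ?_, ?_⟩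
    · rw [mem_univ_pi]
      intro i
      have hRc : Continuous fun w : ℂ × ℂ => (R i j).evalEval w.1 w.2 := (aux_evdiff _).continuous
      have h1 : Filter.Tendsto (fun z => (R i j).evalEval (M z i j / M z j j) (v z j)) V
          (nhds ((R i j).evalEval (L i j / L j j) 0)) :=
        (hRc.tendsto (L i j / L j j, 0)).comp
          (((hVt' i j).div (hVt' j j) hj).prodMk_nhds
            ((hvt j).mono_left (hVl.trans nhdsWithin_le_nhds)))
      have h2 : (R i j).evalEval (L i j / L j j) 0 = 0 := by
        refine tendsto_nhds_unique h1 (tendsto_const_nhds.congr' ?_)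
        filter_upwards [hVev, (hVt' j j).eventually_ne hj] with z hz hz2
        obtain ⟨h3, h4⟩ := hMdiv z i j hz2
        rw [← h4]
        exact (hR i j _ _ h3 (hP i j _ (h.hX z (by simpa using hz.2)))).symm
      rw [Polynomial.evalEval, Polynomial.C_0, ← Polynomial.coeff_zero_eq_eval_zero] at h2
      exact h2
    · have h3 : ∀ a b, L a j / L j j * (starRingEnd ℂ) (L b j / L j j) = L a b / L j j := by
        intro a b
        rw [map_div₀, hLconj, hLconj]
        field_simp
        linear_combination -hLrk a b j
      funext a b
      simp only [hG, h3]
      rw [← Finset.sum_div, hLtr]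
      field_simp
  obtain ⟨L, hL⟩ := aux_conv M r h.hr hMc _ (isCompact_closedBall _ _) (fun z _ _ => hMbd z) F hFfin hcl
  have hL' : ∀ a b, Filter.Tendsto (fun z => M z a b) (nhdsWithin 0 {0}ᶜ) (nhds (L a b)) := fun a b =>
      (tendsto_pi_nhds.1 (tendsto_pi_nhds.1 hL a) b)
  have hLtr : ∑ a, L a a = 1 := by
    refine tendsto_nhds_unique (tendsto_finsetSum _ fun a _ => hL' a a) ?_
    refine tendsto_const_nhds.congr' ?_
    filter_upwards [hev] with z hz using (hMtr z hz.1 hz.2).symm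
  obtain ⟨j, hj⟩ : ∃ j, L j j ≠ 0 := by
    by_contra! hcon
    simp [hcon] at hLtr
  refine ⟨j, fun i => L i j / L j j, fun ε hε => ?_⟩
  refine h.ev (Q := fun x => ∀ i, ‖(x i - p i) - L i j / L j j * (x j - p j)‖ ≤ ε * ‖x j - p j‖) ?_
  rw [Filter.eventually_all]
  intro i
  have h1 : ∀ᶠ z in nhdsWithin (0:ℂ) {0}ᶜ, ‖v z i - L i j / L j j * v z j‖ ≤ ε * ‖v z j‖ := by
    have h2 := ((hL' i j).div (hL' j j) hj)
    rw [tendsto_iff_norm_sub_tendsto_zero] at h2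
    filter_upwards [h2.eventually (gt_mem_nhds hε), (hL' j j).eventually_ne hj] with z h3 h4
    obtain ⟨h5, h6⟩ := hMdiv z i j h4
    simp only [Pi.div_apply] at h3
    rw [← h6] at h3
    calc ‖v z i - L i j / L j j * v z j‖ = ‖(v z i / v z j - L i j / L j j) * v z j‖ := by
          congr 1; field_simp
      _ ≤ ε * ‖v z j‖ := by rw [norm_mul]; gcongr
  rw [eventually_nhdsWithin_iff] at h1
  filter_upwards [h1] with z hz
  by_cases hz0 : z = 0
  · subst hz0
    simp [h.h0]
  · exact hz hz0


def auxPsi (Q : Polynomial (Polynomial ℂ)) : ℂ × ℂ → ℂ × ℂ := fun w => (w.1, Q.evalEval w.1 w.2)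

lemma aux_psi_equiv (Q : Polynomial (Polynomial ℂ)) (w y : ℂ)
    (h : (Polynomial.derivative Q).evalEval w y ≠ 0) :
    ∃ e : (ℂ × ℂ) ≃L[ℂ] (ℂ × ℂ), HasStrictFDerivAt (auxPsi Q) (e : (ℂ × ℂ) →L[ℂ] (ℂ × ℂ)) (w, y) := by
  set T : (ℂ × ℂ) →L[ℂ] (ℂ × ℂ) := (ContinuousLinearMap.fst ℂ ℂ ℂ).prod
    (fderiv ℂ (fun w : ℂ × ℂ => Q.evalEval w.1 w.2) (w, y)) with hT
  have hstrict : HasStrictFDerivAt (auxPsi Q) T (w, y) := by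
    refine HasStrictFDerivAt.prodMk hasStrictFDerivAt_fst ?_
    exact (aux_evdiff Q).contDiffAt.hasStrictFDerivAt (by simp)
  have hinj : Function.Injective (T : (ℂ × ℂ) →ₗ[ℂ] (ℂ × ℂ)) := by
    rw [← LinearMap.ker_eq_bot, LinearMap.ker_eq_bot']
    rintro ⟨a, b⟩ hab
    have h1 : a = 0 := congrArg Prod.fst hab
    subst h1
    have h2 : fderiv ℂ (fun w : ℂ × ℂ => Q.evalEval w.1 w.2) (w, y) (0, b) = 0 :=
      congrArg Prod.snd hab
    have h3 : ((0, b) : ℂ × ℂ) = b • (0, 1) := by simp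
    rw [h3, map_smul, aux_evder, smul_eq_mul, mul_eq_zero] at h2
    rw [h2.resolve_right h]; rfl
  refine ⟨(LinearEquiv.ofInjectiveEndo _ hinj).toContinuousLinearEquiv, ?_⟩
  convert hstrict using 1
  ext <;> rfl

lemma aux_psi_proper (Q : Polynomial (Polynomial ℂ)) (hQ : Q.Monic) (hd : 1 ≤ Q.natDegree) :
    IsProperMap (auxPsi Q) := by
  have hc : Continuous (auxPsi Q) := continuous_fst.prodMk (aux_evdiff Q).continuous
  rw [isProperMap_iff_isCompact_preimage]
  refine ⟨hc, fun K hK => ?_⟩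
  obtain ⟨B, hB⟩ := hK.isBounded.exists_norm_le
  obtain ⟨A, hA⟩ : ∃ A : ℝ, ∀ i ∈ Finset.range Q.natDegree, ∀ w : ℂ, ‖w‖ ≤ B →
      ‖(Q.coeff i).eval w‖ ≤ A := by
    have h1 : ∀ i : ℕ, ∃ A : ℝ, ∀ w : ℂ, ‖w‖ ≤ B → ‖(Q.coeff i).eval w‖ ≤ A := by
      intro i
      obtain ⟨A, hA⟩ := (isCompact_closedBall (0:ℂ) B).exists_bound_of_continuousOn
        (f := fun w => (Q.coeff i).eval w) (Polynomial.continuous _).continuousOn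
      exact ⟨A, fun w hw => hA w (by simpa using hw)⟩
    choose A hA using h1
    refine ⟨∑ i ∈ Finset.range Q.natDegree, |A i|, fun i hi w hw => ?_⟩
    exact (hA i w hw).trans ((le_abs_self _).trans
      (Finset.single_le_sum (f := fun i => |A i|) (fun i _ => abs_nonneg _) hi))
  refine Metric.isCompact_of_isClosed_isBounded (hK.isClosed.preimage hc) ?_
  refine (isBounded_iff_forall_norm_le).2 ⟨max B (max 1 (B + Q.natDegree * A)), ?_⟩
  rintro ⟨w, y⟩ hwy
  have h1 := hB _ hwy
  have hw : ‖w‖ ≤ B := (norm_fst_le (auxPsi Q (w, y))).trans h1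
  have hq : ‖Q.evalEval w y‖ ≤ B := (norm_snd_le (auxPsi Q (w, y))).trans h1
  rw [Prod.norm_def]
  refine max_le_max hw ?_
  simp only
  by_cases hy : ‖y‖ ≤ 1
  · exact hy.trans (le_max_left _ _)
  refine le_trans ?_ (le_max_right _ _)
  push Not at hy
  rw [aux_evsum, Finset.sum_range_succ, hQ.coeff_natDegree, Polynomial.eval_one, one_mul] at hq
  have hB0 : 0 ≤ B := (norm_nonneg _).trans hw
  have h2 : ‖∑ i ∈ Finset.range Q.natDegree, (Q.coeff i).eval w * y ^ i‖ ≤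
      Q.natDegree * A * ‖y‖ ^ (Q.natDegree - 1) := by
    refine (norm_sum_le _ _).trans ?_
    refine (Finset.sum_le_card_nsmul _ _ (A * ‖y‖ ^ (Q.natDegree - 1)) ?_).trans (by simp [mul_assoc])
    intro i hi
    rw [norm_mul, norm_pow]
    have := Finset.mem_range.1 hi
    refine mul_le_mul (hA i hi w hw) (pow_le_pow_right₀ hy.le (by omega)) (by positivity)
      ((norm_nonneg _).trans (hA i hi w hw))
  have h3 : ‖y‖ ^ Q.natDegree ≤ (B + Q.natDegree * A) * ‖y‖ ^ (Q.natDegree - 1) := by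
    have h4 := norm_sub_norm_le (y ^ Q.natDegree)
      (-(∑ i ∈ Finset.range Q.natDegree, (Q.coeff i).eval w * y ^ i))
    rw [sub_neg_eq_add, norm_neg, norm_pow, add_comm (y ^ _)] at h4
    have h5 : B ≤ B * ‖y‖ ^ (Q.natDegree - 1) :=
      le_mul_of_one_le_right hB0 (one_le_pow₀ hy.le)
    nlinarith
  have h6 : ‖y‖ ^ Q.natDegree = ‖y‖ * ‖y‖ ^ (Q.natDegree - 1) := by
    rw [← pow_succ']; congr 1; omega
  rw [h6] at h3
  exact le_of_mul_le_mul_right h3 (by positivity)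

lemma aux_mono (Q : Polynomial (Polynomial ℂ)) (hQ : Q.Monic) (w0 : ℂ) (ρ : ℝ)
    (hs : ∀ w ∈ ball w0 ρ, ∀ y, Q.evalEval w y = 0 → (Polynomial.derivative Q).evalEval w y ≠ 0)
    (Γ : C(unitInterval, ℂ × ℂ)) (h1 : ∀ t, (Γ t).1 ∈ ball w0 ρ)
    (h2 : ∀ t, Q.evalEval (Γ t).1 (Γ t).2 = 0) (h01 : (Γ 0).1 = (Γ 1).1) : Γ 0 = Γ 1 := by
  have hd : 1 ≤ Q.natDegree := by
    by_contra hcon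
    have h3 : Q = 1 := hQ.natDegree_eq_zero.1 (by omega)
    have := h2 0
    rw [h3, Polynomial.evalEval_one] at this
    exact one_ne_zero this
  have hcov : IsCoveringMapOn (auxPsi Q) (ball w0 ρ ×ˢ {0}) := by
    refine (aux_psi_proper Q hQ hd).isClosedMap.isCoveringMapOn_of_isLocalHomeomorphOn ?_ ?_
    · rintro ⟨w, c⟩ ⟨hw, hc⟩
      have h3 : Q.map (Polynomial.evalRingHom w) ≠ 0 := (hQ.map _).ne_zero
      refine ((Polynomial.finite_setOfPred_isRoot h3).image fun y => (w, y)).subset ?_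
      rintro ⟨w', y⟩ hy
      have hy' : auxPsi Q (w', y) = (w, c) := hy
      have h4 : w' = w := congrArg Prod.fst hy'
      have h5 : Q.evalEval w' y = c := congrArg Prod.snd hy'
      subst h4
      refine ⟨y, ?_, rfl⟩
      change Polynomial.eval y (Q.map (Polynomial.evalRingHom w')) = 0
      rw [Polynomial.map_evalRingHom_eval, h5]
      exact hc
    · rintro ⟨w, y⟩ ⟨hw, hc⟩
      obtain ⟨e, he⟩ := aux_psi_equiv Q w y (hs w hw y hc)
      exact ⟨he.toOpenPartialHomeomorph (auxPsi Q), he.mem_toOpenPartialHomeomorph_source, rfl⟩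
  have hr : 0 < ρ := (dist_nonneg).trans_lt (mem_ball.1 (h1 0))
  have : ContractibleSpace (ball w0 ρ) := (convex_ball w0 ρ).contractibleSpace ⟨w0, by simpa using hr⟩
  have : LocallyPathConnectedSpace (ball w0 ρ) := isOpen_ball.locallyPathConnectedSpace
  obtain ⟨F, ⟨hF0, hF⟩, -⟩ := hcov.existsUnique_continuousMap_lifts
    (A := ball w0 ρ) ⟨fun a => ((a : ℂ), (0 : ℂ)), by fun_prop⟩ (a₀ := ⟨(Γ 0).1, h1 0⟩) (e₀ := Γ 0)
    (by simp [auxPsi, h2]) (fun a => ⟨a.2, rfl⟩)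
  have hG : Continuous fun t : unitInterval => F ⟨(Γ t).1, h1 t⟩ := by
    fun_prop
  have : ContractibleSpace unitInterval :=
    (convex_Icc (0:ℝ) 1).contractibleSpace ⟨0, by simp⟩
  have : LocallyPathConnectedSpace unitInterval :=
    (convex_Icc (0:ℝ) 1).locallyPathConnectedSpace
  have huniq := hcov.existsUnique_continuousMap_lifts
    (A := unitInterval) ⟨fun a => ((Γ a).1, (0 : ℂ)), by fun_prop⟩ (a₀ := 0) (e₀ := Γ 0)
    (by simp [auxPsi, h2]) (fun a => ⟨h1 a, rfl⟩)
  have hE := huniq.unique (y₁ := Γ) (y₂ := ⟨_, hG⟩)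
    ⟨rfl, by funext t; simp [auxPsi, h2]⟩ ⟨hF0, by
      funext t
      exact congrFun hF ⟨(Γ t).1, h1 t⟩⟩
  have hE1 := congrArg (fun f : C(unitInterval, ℂ × ℂ) => f 1) hE
  simp only [ContinuousMap.coe_mk] at hE1
  rw [hE1, ← hF0]
  congr 1
  exact Subtype.ext h01


structure AuxPol {n : ℕ} (X : Set (EuclideanSpace ℂ (Fin n))) (p : EuclideanSpace ℂ (Fin n))
    (j : Fin n) (Q : Fin n → Polynomial (Polynomial ℂ)) (b : Fin n → Polynomial ℂ) (m : ℝ) :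
    Prop where
  hm : 0 < m
  hQ : ∀ i, (Q i).Monic
  hb : ∀ i w, w ≠ 0 → ‖w‖ < m → (b i).eval w ≠ 0
  hs : ∀ i w y, w ≠ 0 → ‖w‖ < m → (Q i).evalEval w y = 0 →
    (Polynomial.derivative (Q i)).evalEval w y ≠ 0
  hX : ∀ x ∈ X, ∀ i, (Q i).evalEval (x j - p j) ((b i).eval (x j - p j) * (x i - p i)) = 0

lemma aux_pol {n : ℕ} {X : Set (EuclideanSpace ℂ (Fin n))} (hX : IsAlgebraicCurve X)
    (p : EuclideanSpace ℂ (Fin n)) (j : Fin n) : ∃ Q b m, AuxPol X p j Q b m := by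
  have hdep := fun i : Fin n => aux_dep hX (MvPolynomial.X j - MvPolynomial.C (p j))
    (MvPolynomial.X i - MvPolynomial.C (p i))
  choose P hP0 hP using hdep
  simp only [map_sub, MvPolynomial.eval_X, MvPolynomial.eval_C] at hP
  have hM := fun i => aux_monic (P i) (hP0 i)
  choose Q b c hQ hc hb hr hs using hM
  have h1 : ∀ᶠ w in nhdsWithin (0:ℂ) {0}ᶜ, ∀ i, (c i).eval w ≠ 0 := by
    rw [Filter.eventually_all]
    intro i
    have h2 : {w | (c i).IsRoot w}.Finite := Polynomial.finite_setOfPred_isRoot (hc i)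
    have h3 : ({w | (c i).IsRoot w} \ {0})ᶜ ∈ nhds (0:ℂ) :=
      (h2.sdiff).isClosed.isOpen_compl.mem_nhds (by simp)
    filter_upwards [mem_nhdsWithin_of_mem_nhds h3, self_mem_nhdsWithin] with w hw hw0 hcw
    exact hw ⟨hcw, hw0⟩
  rw [eventually_nhdsWithin_iff, Metric.eventually_nhds_iff_ball] at h1
  obtain ⟨m, hm, hmc⟩ := h1
  have hmc' : ∀ i w, w ≠ 0 → ‖w‖ < m → (c i).eval w ≠ 0 := fun i w hw hwm =>
    hmc w (by simpa using hwm) hw i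
  exact ⟨Q, b, m, hm, hQ, fun i w hw hwm => hb i w (hmc' i w hw hwm),
    fun i w y hw hwm => hs i w y (hmc' i w hw hwm), fun x hx i => hr i _ _ (hP i x hx)⟩

lemma aux_norm (n : ℕ) : ∃ C : ℝ, 0 < C ∧ ∀ (x : EuclideanSpace ℂ (Fin n)) (B : ℝ), 0 ≤ B →
    (∀ i, ‖x i‖ ≤ B) → ‖x‖ ≤ C * B := by
  set e := EuclideanSpace.equiv (Fin n) ℂ
  refine ⟨‖(e.symm : (Fin n → ℂ) →L[ℂ] EuclideanSpace ℂ (Fin n))‖ + 1, by positivity, fun x B hB hx => ?_⟩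
  have h1 : ‖x‖ ≤ ‖(e.symm : (Fin n → ℂ) →L[ℂ] EuclideanSpace ℂ (Fin n))‖ * ‖e x‖ := by
    have := (e.symm : (Fin n → ℂ) →L[ℂ] EuclideanSpace ℂ (Fin n)).le_opNorm (e x)
    simpa using this
  have h2 : ‖e x‖ ≤ B := (pi_norm_le_iff_of_nonneg hB).2 hx
  calc ‖x‖ ≤ _ := h1
    _ ≤ ‖(e.symm : (Fin n → ℂ) →L[ℂ] EuclideanSpace ℂ (Fin n))‖ * B := by gcongr
    _ ≤ _ := by gcongr; linarith

set_option maxHeartbeats 1000000 in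
lemma aux_inj {n : ℕ} {X : Set (EuclideanSpace ℂ (Fin n))}
    {p : EuclideanSpace ℂ (Fin n)} {φ : ℂ → EuclideanSpace ℂ (Fin n)} {r K : ℝ}
    (h : AuxPhi X p φ r K) {j : Fin n} {ρ : Fin n → ℂ}
    (hρ : ∀ ε : ℝ, 0 < ε → ∀ᶠ x in nhdsWithin p X, ∀ i,
      ‖(x i - p i) - ρ i * (x j - p j)‖ ≤ ε * ‖x j - p j‖)
    {Q : Fin n → Polynomial (Polynomial ℂ)} {b : Fin n → Polynomial ℂ} {m : ℝ}
    (hpol : AuxPol X p j Q b m) :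
    ∃ (r0 C0 : ℝ), 0 < r0 ∧ 1 ≤ C0 ∧ ∀ x ∈ X ∩ ball p r0,
      (∀ x' ∈ X ∩ ball p r0, x j = x' j → x = x') ∧ ‖x - p‖ ≤ C0 * ‖x j - p j‖ ∧
      (∃ z ∈ ball (0:ℂ) r, φ z = x) ∧ ‖x j - p j‖ < m := by
  obtain ⟨C, hC, hCn⟩ := aux_norm n
  have hK : 0 < K := by linarith [h.hK]
  set ε : ℝ := 1 / (8 * K * K * C) with hε
  have hε0 : 0 < ε := by positivity
  have hj : ∀ᶠ x in nhdsWithin p X, ‖x j - p j‖ < m / 2 := by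
    apply eventually_nhdsWithin_of_eventually_nhds
    have : ContinuousAt (fun x : EuclideanSpace ℂ (Fin n) => ‖x j - p j‖) p := by fun_prop
    exact this.eventually_lt_const (by simpa using half_pos hpol.hm)
  have hall := ((hρ ε hε0).and hj).and ((hρ 1 one_pos).and h.hS)
  rw [eventually_nhdsWithin_iff, Metric.eventually_nhds_iff_ball] at hall
  obtain ⟨r0, hr0, hall⟩ := hall
  refine ⟨r0, max 1 (C * (1 + ∑ i, ‖ρ i‖)), hr0, le_max_left _ _, fun x hx => ?_⟩
  obtain ⟨⟨hx1, hx2⟩, hx3, hx4⟩ := hall x hx.2 hx.1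
  have hxp : ‖x - p‖ ≤ max 1 (C * (1 + ∑ i, ‖ρ i‖)) * ‖x j - p j‖ := by
    have h1 : ∀ i, ‖(x - p) i‖ ≤ (1 + ∑ i, ‖ρ i‖) * ‖x j - p j‖ := by
      intro i
      have h2 := hx3 i
      have h3 : ‖ρ i‖ ≤ ∑ i, ‖ρ i‖ :=
        Finset.single_le_sum (f := fun i => ‖ρ i‖) (fun i _ => norm_nonneg _) (Finset.mem_univ i)
      have h4 : (x - p) i = ((x i - p i) - ρ i * (x j - p j)) + ρ i * (x j - p j) := by
        simp
      rw [h4]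
      refine (norm_add_le _ _).trans ?_
      rw [norm_mul]
      have : ‖ρ i‖ * ‖x j - p j‖ ≤ (∑ i, ‖ρ i‖) * ‖x j - p j‖ := by gcongr
      linarith
    have h0 : 0 ≤ ∑ i, ‖ρ i‖ := Finset.sum_nonneg fun i _ => norm_nonneg _
    refine (hCn _ _ (by positivity) h1).trans ?_
    rw [← mul_assoc]
    gcongr
    exact le_max_right _ _
  refine ⟨?_, hxp, hx4, hx2.trans (by linarith [hpol.hm])⟩
  intro x' hx' hxx'
  obtain ⟨⟨hx1', hx2'⟩, hx3', hx4'⟩ := hall x' hx'.2 hx'.1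
  rw [← hxx'] at hx1' hx2' hx3'
  set w := x j - p j with hw
  have hd : ‖x - x'‖ ≤ C * (2 * ε * ‖w‖) := by
    refine hCn _ _ (by positivity) fun i => ?_
    have h4 : (x - x') i = ((x i - p i) - ρ i * w) - ((x' i - p i) - ρ i * w) := by
      simp
    rw [h4]
    refine (norm_sub_le _ _).trans ?_
    linarith [hx1 i, hx1' i]
  by_cases hw0 : w = 0
  · rw [hw0, norm_zero, mul_zero, mul_zero] at hd
    exact sub_eq_zero.1 (norm_le_zero_iff.1 hd)
  have hwpos : 0 < ‖w‖ := norm_pos_iff.2 hw0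
  obtain ⟨z, hz, hzx⟩ := hx4
  obtain ⟨z', hz', hzx'⟩ := hx4'
  set l : unitInterval → ℂ := fun t => AffineMap.lineMap z z' (t : ℝ) with hl
  have hlc : Continuous l := by
    simp only [hl]
    exact AffineMap.lineMap_continuous.comp continuous_subtype_val
  have hlb : ∀ t, l t ∈ ball (0:ℂ) r := by
    intro t
    exact (convex_ball (0:ℂ) r).segment_subset hz hz'
      (by rw [segment_eq_image_lineMap]; exact ⟨t, t.2, rfl⟩)
  have hφl : Continuous fun t => φ (l t) := h.cont.comp_continuous hlc hlb
  have hnear : ∀ t, ‖φ (l t) - x‖ ≤ ‖w‖ / 4 := by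
    intro t
    have h1 := (h.hL _ (hlb t) _ hz).1
    have h2 := (h.hL _ hz' _ hz).2
    rw [hzx] at h1 h2
    rw [hzx', norm_sub_rev x'] at h2
    have h3 : ‖l t - z‖ ≤ ‖z' - z‖ := by
      have h5 : l t - z = (t : ℝ) • (z' - z) := by
        simp [hl, AffineMap.lineMap_apply]
      rw [h5, norm_smul, Real.norm_of_nonneg t.2.1]
      exact mul_le_of_le_one_left (norm_nonneg _) t.2.2
    calc ‖φ (l t) - x‖ ≤ K * ‖l t - z‖ := h1
      _ ≤ K * (K * (C * (2 * ε * ‖w‖))) := by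
        gcongr
        exact h3.trans (h2.trans (by gcongr))
      _ = ‖w‖ / 4 := by rw [hε]; field_simp; norm_num
  have hball : ∀ t, φ (l t) j - p j ∈ ball w (‖w‖ / 2) := by
    intro t
    rw [mem_ball, dist_eq_norm]
    have h1 := PiLp.norm_apply_le (φ (l t) - x) j
    have h2 : φ (l t) j - p j - w = (φ (l t) - x) j := by simp [hw]
    rw [h2]
    exact h1.trans_lt ((hnear t).trans_lt (by linarith))
  have hrange : ∀ u ∈ ball w (‖w‖ / 2), u ≠ 0 ∧ ‖u‖ < m := by
    intro u hu
    rw [mem_ball, dist_eq_norm] at hu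
    have h1 := norm_sub_norm_le u w
    have h2 := norm_sub_norm_le w u
    rw [norm_sub_rev w u] at h2
    refine ⟨?_, by linarith⟩
    rintro rfl
    rw [norm_zero] at h2
    linarith
  have hl0 : φ (l 0) = x := by simp [hl, hzx]
  have hl1 : φ (l 1) = x' := by simp [hl, hzx']
  have hcj : ∀ i, Continuous fun t => φ (l t) i - p i := fun i =>
    ((EuclideanSpace.proj (𝕜 := ℂ) i).continuous.comp hφl).sub continuous_const
  have hfin : ∀ i, x i = x' i := by
    intro i
    let Γ : C(unitInterval, ℂ × ℂ) := ⟨fun t => (φ (l t) j - p j,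
      (b i).eval (φ (l t) j - p j) * (φ (l t) i - p i)), (hcj j).prodMk (((b i).continuous.comp (hcj j)).mul (hcj i))⟩
    have h1 := aux_mono (Q i) (hpol.hQ i) w (‖w‖ / 2)
      (fun u hu y => hpol.hs i u y (hrange u hu).1 (hrange u hu).2) Γ hball
      (fun t => hpol.hX _ (h.hX _ (hlb t)) i) (by simp [Γ, hl0, hl1, hxx'])
    have h2 := congrArg Prod.snd h1
    simp only [Γ, ContinuousMap.coe_mk, hl0, hl1, ← hxx'] at h2
    have h3 := mul_left_cancel₀ (hpol.hb i w hw0 (hx2.trans (by linarith [hpol.hm]))) h2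
    exact sub_left_injective h3
  ext i
  exact hfin i

lemma aux_implicit (Q : Polynomial (Polynomial ℂ)) (w y : ℂ) (h0 : Q.evalEval w y = 0)
    (h : (Polynomial.derivative Q).evalEval w y ≠ 0) :
    ∃ g : ℂ → ℂ, AnalyticAt ℂ g w ∧ ∀ᶠ v in nhds (w, y), Q.evalEval v.1 v.2 = 0 → v.2 = g v.1 := by
  obtain ⟨e, he⟩ := aux_psi_equiv Q w y h
  have hc : ContDiffAt ℂ 1 (auxPsi Q) (w, y) := (contDiff_fst.prodMk (aux_evdiff Q)).contDiffAt
  have h1 := hc.to_localInverse he.hasFDerivAt (by simp)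
  have h2 := he.eventually_left_inverse
  have h3 : auxPsi Q (w, y) = (w, 0) := by simp [auxPsi, h0]
  refine ⟨fun u => (he.localInverse _ _ _ (u, 0)).2, ?_, ?_⟩
  · rw [Complex.analyticAt_iff_eventually_differentiableAt]
    have h4 : ContDiffAt ℂ 1 (fun u : ℂ => (he.localInverse _ _ _ (u, 0)).2) w := by
      rw [h3] at h1
      have h5 : ContDiffAt ℂ 1 (fun u : ℂ => ((u, 0) : ℂ × ℂ)) w :=
        contDiffAt_id.prodMk contDiffAt_const
      exact contDiffAt_snd.comp w (ContDiffAt.comp w h1 h5)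
    filter_upwards [h4.eventually (by simp)] with u hu
    exact hu.differentiableAt (by simp)
  · filter_upwards [h2] with v hv hv0
    have h6 : auxPsi Q v = (v.1, 0) := by simp [auxPsi, hv0]
    rw [h6] at hv
    rw [hv]

lemma aux_freq {n : ℕ} {X : Set (EuclideanSpace ℂ (Fin n))} (hX : IsAlgebraicCurve X)
    (s : ℂ → EuclideanSpace ℂ (Fin n)) (w : ℂ) (hs : ∀ i, AnalyticAt ℂ (fun u => s u i) w)
    (hf : ∃ᶠ u in nhdsWithin w {w}ᶜ, s u ∈ X) : ∀ᶠ u in nhds w, s u ∈ X := by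
  obtain ⟨F, hF, rfl⟩ := hX
  have h1 : ∃ C ∈ F, ∃ᶠ u in nhdsWithin w {w}ᶜ, s u ∈ C := by
    by_contra hcon
    push Not at hcon
    apply hf
    have h2 : ∀ᶠ u in nhdsWithin w {w}ᶜ, ∀ C ∈ F, s u ∉ C := by
      rw [Filter.eventually_all_finset]
      intro C hC
      exact hcon C hC
    filter_upwards [h2] with u hu hu'
    simp only [mem_iUnion] at hu'
    obtain ⟨C, hC, hsC⟩ := hu'
    exact hu C hC hsC
  obtain ⟨C, hC, hCf⟩ := h1
  obtain ⟨S, hS⟩ := (hF C hC).1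
  have h3 : ∀ᶠ u in nhds w, ∀ P ∈ S, MvPolynomial.eval (fun i => s u i) P = 0 := by
    rw [Filter.eventually_all_finset]
    intro P hP
    have h4 : AnalyticAt ℂ (fun u => MvPolynomial.eval (fun i => s u i) P) w := by
      have := AnalyticAt.aeval_mvPolynomial (f := fun u i => s u i) hs P
      simpa [MvPolynomial.aeval_eq_eval] using this
    rw [← h4.frequently_zero_iff_eventually_zero]
    refine hCf.mono fun u hu => ?_
    rw [hS] at hu
    exact hu P hP
  filter_upwards [h3] with u hu
  simp only [mem_iUnion]
  refine ⟨C, hC, ?_⟩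
  rw [hS]
  exact hu

lemma aux_local {n : ℕ} {X : Set (EuclideanSpace ℂ (Fin n))} (hX : IsAlgebraicCurve X)
    {p : EuclideanSpace ℂ (Fin n)} {φ : ℂ → EuclideanSpace ℂ (Fin n)} {r K : ℝ}
    (h : AuxPhi X p φ r K) {j : Fin n}
    {Q : Fin n → Polynomial (Polynomial ℂ)} {b : Fin n → Polynomial ℂ} {m : ℝ}
    (hpol : AuxPol X p j Q b m) {r0 C0 : ℝ}
    (hinj : ∀ x ∈ X ∩ ball p r0,
      (∀ x' ∈ X ∩ ball p r0, x j = x' j → x = x') ∧ ‖x - p‖ ≤ C0 * ‖x j - p j‖ ∧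
      (∃ z ∈ ball (0:ℂ) r, φ z = x) ∧ ‖x j - p j‖ < m)
    {x0 : EuclideanSpace ℂ (Fin n)} (hx0 : x0 ∈ X ∩ ball p r0) (hw : x0 j - p j ≠ 0) :
    ∃ s : ℂ → EuclideanSpace ℂ (Fin n), s (x0 j - p j) = x0 ∧
      DifferentiableAt ℂ s (x0 j - p j) ∧
      ∀ᶠ w in nhds (x0 j - p j), s w ∈ X ∧ s w j - p j = w := by
  obtain ⟨-, -, ⟨z0, hz0, hzx⟩, hm⟩ := hinj x0 hx0
  set w0 := x0 j - p j with hw0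
  have hg := fun i => aux_implicit (Q i) w0 ((b i).eval w0 * (x0 i - p i)) (hpol.hX x0 hx0.1 i)
    (hpol.hs i _ _ hw hm (hpol.hX x0 hx0.1 i))
  choose g hga hgl using hg
  set s : ℂ → EuclideanSpace ℂ (Fin n) := fun w =>
    WithLp.toLp 2 (fun i => p i + g i w / (b i).eval w) with hs
  have hsa : ∀ i, AnalyticAt ℂ (fun u => s u i) w0 := by
    intro i
    have hb : AnalyticAt ℂ (fun u => (b i).eval u) w0 :=
      (b i).differentiable.analyticAt w0
    exact analyticAt_const.add ((hga i).div hb (hpol.hb i w0 hw hm))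
  have hd : DifferentiableAt ℂ s w0 := by
    have h1 : DifferentiableAt ℂ (fun u => (EuclideanSpace.equiv (Fin n) ℂ) (s u)) w0 :=
      differentiableAt_pi.2 fun i => (hsa i).differentiableAt
    exact (ContinuousLinearEquiv.comp_differentiableAt_iff _).1 h1
  have hcj : ∀ i, Continuous fun x : EuclideanSpace ℂ (Fin n) => x i - p i := fun i =>
    (EuclideanSpace.proj (𝕜 := ℂ) i).continuous.sub continuous_const
  have hxs : ∀ᶠ x in nhds x0, x ∈ X → s (x j - p j) = x := by
    have h1 : ∀ᶠ x in nhds x0, ∀ i, (Q i).evalEval (x j - p j)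
        ((b i).eval (x j - p j) * (x i - p i)) = 0 →
        (b i).eval (x j - p j) * (x i - p i) = g i (x j - p j) := by
      rw [Filter.eventually_all]
      intro i
      have hc : Continuous fun x : EuclideanSpace ℂ (Fin n) =>
        (x j - p j, (b i).eval (x j - p j) * (x i - p i)) :=
        (hcj j).prodMk (((b i).continuous.comp (hcj j)).mul (hcj i))
      exact (hc.tendsto x0).eventually (hgl i)
    have h2 : ∀ᶠ x in nhds x0, ∀ i, (b i).eval (x j - p j) ≠ 0 := by
      rw [Filter.eventually_all]
      intro i
      exact (((b i).continuous.comp (hcj j)).continuousAt).eventually_ne (hpol.hb i w0 hw hm)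
    filter_upwards [h1, h2] with x hx1 hx2 hxX
    ext i
    have h3 := hx1 i (hpol.hX x hxX i)
    simp only [hs]
    rw [← h3, mul_div_cancel_left₀ _ (hx2 i)]
    ring
  have hφc : ContinuousAt φ z0 := h.cont.continuousAt (isOpen_ball.mem_nhds hz0)
  have hω : Filter.Tendsto (fun z => φ z j - p j) (nhdsWithin z0 {z0}ᶜ) (nhdsWithin w0 {w0}ᶜ) := by
    apply tendsto_nhdsWithin_of_tendsto_nhds_of_eventually_within
    · have h1 : Filter.Tendsto (fun z => φ z j - p j) (nhds z0) (nhds (φ z0 j - p j)) :=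
        ((hcj j).tendsto _).comp hφc
      rw [hzx] at h1
      exact h1.mono_left nhdsWithin_le_nhds
    · have h1 : ∀ᶠ z in nhds z0, φ z ∈ ball p r0 :=
        hφc.eventually_mem (isOpen_ball.mem_nhds (by rw [hzx]; exact hx0.2))
      have h2 : ∀ᶠ z in nhds z0, z ∈ ball (0:ℂ) r := isOpen_ball.mem_nhds hz0
      filter_upwards [nhdsWithin_le_nhds h1, nhdsWithin_le_nhds h2, self_mem_nhdsWithin]
        with z hz1 hz2 hz3 hz4
      have h3 : φ z j = x0 j := sub_left_injective hz4
      have h4 := (hinj (φ z) ⟨h.hX z hz2, hz1⟩).1 x0 hx0 h3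
      have h5 := (h.hL z hz2 z0 hz0).2
      rw [h4, hzx, sub_self, norm_zero, mul_zero] at h5
      exact hz3 (sub_eq_zero.1 (norm_le_zero_iff.1 h5))
  have hev : ∀ᶠ z in nhdsWithin z0 {z0}ᶜ, s (φ z j - p j) ∈ X ∧
      s (φ z j - p j) j - p j - (φ z j - p j) = 0 := by
    have h2 : ∀ᶠ z in nhds z0, z ∈ ball (0:ℂ) r := isOpen_ball.mem_nhds hz0
    rw [← hzx] at hxs
    filter_upwards [nhdsWithin_le_nhds h2, nhdsWithin_le_nhds (hφc.eventually hxs)] with z h1 h2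
    rw [h2 (h.hX z h1)]
    exact ⟨h.hX z h1, sub_self _⟩
  have hfr := hω.frequently (p := fun u => s u ∈ X ∧ s u j - p j - u = 0) hev.frequently
  refine ⟨s, hxs.self_of_nhds hx0.1, hd, ?_⟩
  have e1 := aux_freq hX s w0 hsa (hfr.mono fun u hu => hu.1)
  have ha : AnalyticAt ℂ (fun u => s u j - p j - u) w0 :=
    ((hsa j).sub analyticAt_const).sub analyticAt_id
  have e2 := ha.frequently_zero_iff_eventually_zero.1 (hfr.mono fun u hu => hu.2)
  filter_upwards [e1, e2] with u hu1 hu2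
  exact ⟨hu1, sub_eq_zero.1 hu2⟩

lemma aux_closed {n : ℕ} {X : Set (EuclideanSpace ℂ (Fin n))} (hX : IsAlgebraicCurve X) :
    IsClosed X := by
  obtain ⟨F, hF, rfl⟩ := hX
  refine F.finite_toSet.isClosed_biUnion fun C hC => ?_
  obtain ⟨S, hS⟩ := (hF C hC).1
  rw [hS]
  have : {x : EuclideanSpace ℂ (Fin n) | ∀ p ∈ S, MvPolynomial.eval (fun i => x i) p = 0} =
      ⋂ p ∈ S, {x | MvPolynomial.eval (fun i => x i) p = 0} := by
    ext x; simp
  rw [this]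
  refine isClosed_biInter fun P _ => ?_
  have hc : Continuous fun x : EuclideanSpace ℂ (Fin n) => MvPolynomial.eval (fun i => x i) P :=
    (MvPolynomial.continuous_eval P).comp
      (continuous_pi fun i => (EuclideanSpace.proj (𝕜 := ℂ) i).continuous)
  exact isClosed_eq hc continuous_const

lemma aux_final {n : ℕ} {X : Set (EuclideanSpace ℂ (Fin n))} (hX : IsAlgebraicCurve X)
    {p : EuclideanSpace ℂ (Fin n)} {φ : ℂ → EuclideanSpace ℂ (Fin n)} {r K : ℝ}
    (h : AuxPhi X p φ r K) {j : Fin n}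
    {Q : Fin n → Polynomial (Polynomial ℂ)} {b : Fin n → Polynomial ℂ} {m : ℝ}
    (hpol : AuxPol X p j Q b m) {r0 C0 : ℝ} (hr0 : 0 < r0) (hC0 : 1 ≤ C0)
    (hinj : ∀ x ∈ X ∩ ball p r0,
      (∀ x' ∈ X ∩ ball p r0, x j = x' j → x = x') ∧ ‖x - p‖ ≤ C0 * ‖x j - p j‖ ∧
      (∃ z ∈ ball (0:ℂ) r, φ z = x) ∧ ‖x j - p j‖ < m) :
    IsRegularPoint X p := by
  have hcj : Continuous fun x : EuclideanSpace ℂ (Fin n) => x j - p j :=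
    (EuclideanSpace.proj (𝕜 := ℂ) j).continuous.sub continuous_const
  have hC : 0 < C0 := by linarith
  obtain ⟨m', hm', hm'r⟩ : ∃ m' : ℝ, 0 < m' ∧ C0 * m' = r0 / 2 :=
    ⟨r0 / 2 / C0, by positivity, by field_simp⟩
  have h0r : (0:ℂ) ∈ ball (0:ℂ) r := mem_ball_self h.hr
  have hpX : p ∈ X ∩ ball p r0 := ⟨by have := h.hX 0 h0r; rwa [h.h0] at this, mem_ball_self hr0⟩
  have hsmall : ∀ x ∈ X ∩ ball p r0, ‖x j - p j‖ < m' → x ∈ closedBall p (r0 / 2) := by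
    intro x hx hxm
    rw [mem_closedBall, dist_eq_norm, ← hm'r]
    exact (hinj x hx).2.1.trans (by gcongr)
  set A : Set ℂ := {w | w ≠ 0 ∧ ‖w‖ < m' ∧ ∃ x ∈ X ∩ ball p r0, x j - p j = w} with hA
  have hAo : IsOpen A := by
    rw [isOpen_iff_mem_nhds]
    rintro w ⟨hw0, hwm, x, hx, rfl⟩
    obtain ⟨s, hs0, hsd, hsX⟩ := aux_local hX h hpol hinj hx hw0
    have h1 : ∀ᶠ w in nhds (x j - p j), s w ∈ ball p r0 :=
      hsd.continuousAt.eventually_mem (isOpen_ball.mem_nhds (by rw [hs0]; exact hx.2))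
    have h2 : ∀ᶠ w in nhds (x j - p j), ‖w‖ < m' :=
      continuous_norm.continuousAt.eventually_lt_const hwm
    filter_upwards [h1, h2, hsX, eventually_ne_nhds hw0] with w h1 h2 h3 h4
    exact ⟨h4, h2, s w, ⟨h3.1, h1⟩, h3.2⟩
  have hcov : {z : ℂ | z ≠ 0 ∧ ‖z‖ < m'} ⊆ A := by
    refine (aux_punct m' hm').subset_of_closure_inter_subset hAo ?_ ?_
    · have hφc : ContinuousAt φ 0 := h.cont.continuousAt (isOpen_ball.mem_nhds h0r)
      have h1 : ∀ᶠ z in nhds (0:ℂ), φ z ∈ ball p r0 :=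
        hφc.eventually_mem (isOpen_ball.mem_nhds (by rw [h.h0]; exact hpX.2))
      have h2 : ∀ᶠ z in nhds (0:ℂ), z ∈ ball (0:ℂ) r := isOpen_ball.mem_nhds h0r
      have h3 : ∀ᶠ z in nhds (0:ℂ), ‖φ z j - p j‖ < m' := by
        have h4 : ContinuousAt (fun z => ‖φ z j - p j‖) 0 :=
          ContinuousAt.norm (ContinuousAt.comp (g := fun x : EuclideanSpace ℂ (Fin n) => x j - p j)
            hcj.continuousAt hφc)
        refine h4.eventually_lt_const ?_
        simpa [h.h0] using hm'
      have h5 : ∀ᶠ z in nhdsWithin (0:ℂ) {0}ᶜ, φ z ∈ ball p r0 ∧ z ∈ ball (0:ℂ) r ∧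
          ‖φ z j - p j‖ < m' ∧ z ≠ 0 := by
        filter_upwards [nhdsWithin_le_nhds h1, nhdsWithin_le_nhds h2, nhdsWithin_le_nhds h3,
          self_mem_nhdsWithin] with z h1 h2 h3 h4
        exact ⟨h1, h2, h3, h4⟩
      obtain ⟨z, h1, h2, h3, h4⟩ := h5.exists
      have h6 : φ z j - p j ≠ 0 := by
        intro h7
        have h8 := (hinj (φ z) ⟨h.hX z h2, h1⟩).2.1
        rw [h7, norm_zero, mul_zero] at h8
        have h9 := (h.hL z h2 0 h0r).2
        rw [h.h0, le_antisymm h8 (norm_nonneg _), mul_zero, sub_zero] at h9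
        exact h4 (norm_le_zero_iff.1 h9)
      exact ⟨φ z j - p j, ⟨h6, h3⟩, h6, h3, φ z, ⟨h.hX z h2, h1⟩, rfl⟩
    · have hcomp : IsCompact (X ∩ closedBall p (r0 / 2)) :=
        (isCompact_closedBall p (r0 / 2)).inter_left (aux_closed hX)
      have himg := (hcomp.image hcj).isClosed
      rintro w ⟨hwA, hw0, hwm⟩
      have hsub : A ⊆ (fun x : EuclideanSpace ℂ (Fin n) => x j - p j) ''
          (X ∩ closedBall p (r0 / 2)) := by
        rintro u ⟨hu0, hum, x, hx, rfl⟩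
        exact ⟨x, ⟨hx.1, hsmall x hx hum⟩, rfl⟩
      obtain ⟨x, hx, hxw⟩ := closure_minimal hsub himg hwA
      exact ⟨hw0, hwm, x, ⟨hx.1, closedBall_subset_ball (by linarith) hx.2⟩, hxw⟩
  have hex : ∀ w : ℂ, ∃ x, w ∈ ball (0:ℂ) m' → x ∈ X ∩ ball p r0 ∧ x j - p j = w := by
    intro w
    by_cases hw : w ∈ ball (0:ℂ) m'
    · by_cases hw0 : w = 0
      · exact ⟨p, fun _ => ⟨hpX, by rw [hw0, sub_self]⟩⟩
      · obtain ⟨-, -, x, hx, hxw⟩ := hcov ⟨hw0, by simpa using hw⟩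
        exact ⟨x, fun _ => ⟨hx, hxw⟩⟩
    · exact ⟨p, fun h => absurd h hw⟩
  choose g hg using hex
  have huniq : ∀ w ∈ ball (0:ℂ) m', ∀ x ∈ X ∩ ball p r0, x j - p j = w → g w = x := by
    intro w hw x hx hxw
    refine (hinj (g w) (hg w hw).1).1 x hx ?_
    exact sub_left_injective ((hg w hw).2.trans hxw.symm)
  have hm0 : (0:ℂ) ∈ ball (0:ℂ) m' := mem_ball_self hm'
  have hg0 : g 0 = p := huniq 0 hm0 p hpX (sub_self _)
  have hgd : DifferentiableOn ℂ g (ball (0:ℂ) m') := by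
    rw [← Complex.differentiableOn_compl_singleton_and_continuousAt_iff (isOpen_ball.mem_nhds hm0)]
    constructor
    · rintro w ⟨hw, hw0⟩
      have hw1 := hg w hw
      have hw2 : g w j - p j ≠ 0 := by rw [hw1.2]; exact hw0
      obtain ⟨s, hs0, hsd, hsX⟩ := aux_local hX h hpol hinj hw1.1 hw2
      rw [hw1.2] at hs0 hsd hsX
      have h1 : ∀ᶠ w in nhds w, s w ∈ ball p r0 :=
        hsd.continuousAt.eventually_mem (isOpen_ball.mem_nhds (by rw [hs0]; exact hw1.1.2))
      have h2 : g =ᶠ[nhds w] s := by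
        filter_upwards [h1, hsX, isOpen_ball.mem_nhds hw] with u h1 h2 h3
        exact huniq u h3 _ ⟨h2.1, h1⟩ h2.2
      exact (hsd.congr_of_eventuallyEq h2).differentiableWithinAt
    · have h1 : ∀ᶠ w in nhds (0:ℂ), ‖g w - g 0‖ ≤ C0 * ‖w‖ := by
        filter_upwards [isOpen_ball.mem_nhds hm0] with w hw
        have h2 := (hinj (g w) (hg w hw).1).2.1
        rwa [(hg w hw).2, ← hg0] at h2
      have h3 : Filter.Tendsto (fun w : ℂ => C0 * ‖w‖) (nhds 0) (nhds 0) := by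
        have : Continuous fun w : ℂ => C0 * ‖w‖ := by fun_prop
        simpa using this.tendsto 0
      have h4 := squeeze_zero_norm' h1 h3
      exact tendsto_sub_nhds_zero_iff.1 h4
  refine ⟨ball p r0 ∩ {x | ‖x j - p j‖ < m'}, ball 0 m', g,
    isOpen_ball.inter (isOpen_lt hcj.norm continuous_const), ⟨hpX.2, by simpa using hm'⟩,
    isOpen_ball, hgd, ?_, ?_, ?_, ?_, hgd.continuousOn, fun x => x j - p j, hcj.continuousOn,
    fun z hz => (hg z hz).2⟩
  · intro u hu v hv huv
    rw [← (hg u hu).2, ← (hg v hv).2, huv]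
  · intro z hz hd0
    have h1 : HasDerivAt g 0 z := by
      rw [← hd0]; exact (hgd.differentiableAt (isOpen_ball.mem_nhds hz)).hasDerivAt
    have h2 : HasDerivAt (fun u => g u j) 0 z := by
      have := (EuclideanSpace.proj (𝕜 := ℂ) j : EuclideanSpace ℂ (Fin n) →L[ℂ] ℂ).hasFDerivAt.comp_hasDerivAt z h1
      rw [map_zero] at this
      exact this
    have h3 : HasDerivAt (fun u => g u j - p j) 0 z := h2.sub_const _
    have h4 : (fun u => g u j - p j) =ᶠ[nhds z] id := by
      filter_upwards [isOpen_ball.mem_nhds hz] with u hu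
      exact (hg u hu).2
    have h5 : HasDerivAt (id : ℂ → ℂ) 0 z := h3.congr_of_eventuallyEq h4.symm
    exact zero_ne_one (h5.unique (hasDerivAt_id z))
  · intro u hu v hv huv
    rw [← (hg u hu).2, ← (hg v hv).2, huv]
  · ext x
    constructor
    · rintro ⟨w, hw, rfl⟩
      refine ⟨(hg w hw).1.1, (hg w hw).1.2, ?_⟩
      have := (hg w hw).2
      rw [mem_ofPred_eq, this]
      simpa using hw
    · rintro ⟨hxX, hxb, hxm⟩
      exact ⟨x j - p j, by simpa using hxm, huniq _ (by simpa using hxm) x ⟨hxX, hxb⟩ rfl⟩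

/-- if the germ of a curve `X` at `p` is bi-Lipschitz equivalent to the germ
of a curve `Y` at a regular point `q`, then `p` is a regular point of `X`. -/
theorem stmt_10 (n m : ℕ) (X : Set (EuclideanSpace ℂ (Fin n)))
    (Y : Set (EuclideanSpace ℂ (Fin m)))
    (hX : IsAlgebraicCurve X) (hY : IsAlgebraicCurve Y)
    (p : EuclideanSpace ℂ (Fin n)) (q : EuclideanSpace ℂ (Fin m))
    (hp : p ∈ X) (hq : q ∈ Y) (hqreg : IsRegularPoint Y q)
    (h : GermBiLipschitzEquiv X p Y q) :
    IsRegularPoint X p := by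
  obtain ⟨φ, r, K, hr, hK, h0, hφX, hL, hS⟩ := aux_phi hp hq hqreg h
  have hφ : AuxPhi X p φ r K := ⟨hr, hK, h0, hφX, hL, hS⟩
  obtain ⟨j, ρ, hρ⟩ := aux_tangent hX hφ
  obtain ⟨Q, b, μ, hpol⟩ := aux_pol hX p j
  obtain ⟨r0, C0, hr0, hC0, hinj⟩ := aux_inj hφ hρ hpol
  exact aux_final hX hφ hpol hr0 hC0 hinj

end
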